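/- arXiv:2208.00582 — 3 statements merged into one kernel-verified Lean document; each statement's English description precedes it below -/
import Mathlib

section
/- Let W be a double-well potential, n ≥ 1, and let (ε_i) be a sequence of positive reals with ε_i → 0. For each i let u_i be a double-well phase transition with parameter ε_i on the flat torus T^{1+n}. Let θ_1, θ_2 ∈ [0, 2π) (not necessarily distinct) and set Σ := (({θ_1} ∪ {θ_2}) + 2πℤ) × ℝ^n ⊆ ℝ^{1+n}. Assume each nodal set Z_i := { x ∈ ℝ^{1+n} : u_i(x) = 0 } is nonempty and the Hausdorff distance between Z_i and Σ tends to 0 as i → ∞. Then θ_1 ≠ θ_2 and, in fact, the two angles are antipodal: θ_2 − θ_1 ≡ π (mod 2π). -/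
open Real Filter Set

/-- `W` is a double-well potential. -/
structure IsDoubleWell (W : ℝ → ℝ) : Prop where
  smooth : ContDiff ℝ (⊤ : ℕ∞) W
  nonneg : ∀ x, 0 ≤ W x
  eq_zero_iff : ∀ x, W x = 0 ↔ x = 1 ∨ x = -1
  even : ∀ x, W (-x) = W x
  deriv2_pos_one : 0 < iteratedDeriv 2 W 1
  deriv2_pos_neg_one : 0 < iteratedDeriv 2 W (-1)
  mono : StrictMonoOn (fun x => deriv W x / x) (Set.Ioo (0 : ℝ) 1)
  anti : StrictAntiOn (fun x => deriv W x / x) (Set.Ioo (-1 : ℝ) 0)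

/-- Second derivative of `u` at `x` in the `j`-th coordinate direction. -/
noncomputable def secondDirDeriv {d : ℕ} (u : EuclideanSpace ℝ (Fin d) → ℝ)
    (x : EuclideanSpace ℝ (Fin d)) (j : Fin d) : ℝ :=
  iteratedDeriv 2 (fun t : ℝ => u (x + t • EuclideanSpace.single j 1)) 0

/-- Euclidean Laplacian `Δu = Σ_j ∂²u/∂x_j²`. -/
noncomputable def lap {d : ℕ} (u : EuclideanSpace ℝ (Fin d) → ℝ)
    (x : EuclideanSpace ℝ (Fin d)) : ℝ :=
  ∑ j : Fin d, secondDirDeriv u x j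

/-- Double-well phase transition with parameter `ε` on the flat torus
`(ℝ/2πℤ) × (ℝ/ℤ)ⁿ`, viewed as a periodic function on `ℝ^{1+n}`
(first coordinate is the circle direction). -/
structure IsPhaseTransitionTorus {n : ℕ} (W : ℝ → ℝ) (ε : ℝ)
    (u : EuclideanSpace ℝ (Fin (n + 1)) → ℝ) : Prop where
  smooth : ContDiff ℝ (⊤ : ℕ∞) u
  mem_Icc : ∀ x, u x ∈ Set.Icc (-1 : ℝ) 1
  periodic_first : ∀ x, u (x + (2 * π) • EuclideanSpace.single 0 1) = u x
  periodic_rest : ∀ j : Fin (n + 1), j ≠ 0 →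
    ∀ x, u (x + EuclideanSpace.single j 1) = u x
  pde : ∀ x, ε ^ 2 * lap u x = deriv W (u x)

/-!
Every closed half of the torus, cut out by `0 ≤ cos (x₀ - c)`, meets the nodal set of a phase
transition `u` that vanishes somewhere. Suppose instead, up to sign, that `u < 0` on such a half,
and let `e` be the translation by half a period. Comparing `u (· + e)` with `-u` at a maximum of
their ratio over that half, and using that `s ↦ f s / s` is increasing for `f = ε⁻² W'`, gives
`u + u (· + e) ≤ 0`. By the strong maximum principle and compactness, the set of translations `v`
with `u + u (· + v) ≤ 0` is open as well as closed. Hence it is everything, and `v = 0` shows that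
`u` has no zeros at all.

Two hyperplanes that are not antipodal stay at a positive distance from some closed half of the
torus, so they cannot be a Hausdorff limit of nodal sets.
-/

open scoped Topology NNReal InnerProductSpace Laplacian

section Laplacian

lemma iteratedDeriv_two_comp_add_smul {E F : Type*} [NormedAddCommGroup E] [NormedSpace ℝ E]
    [NormedAddCommGroup F] [NormedSpace ℝ F] {f : E → F} (hf : ContDiff ℝ 2 f) (x v : E) :
    iteratedDeriv 2 (fun t : ℝ => f (x + t • v)) 0 = iteratedFDeriv ℝ 2 f x ![v, v] := by
  have hline (t : ℝ) : HasDerivAt (fun t : ℝ => x + t • v) v t := by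
    simpa using ((hasDerivAt_id t).smul_const v).const_add x
  have hderiv : deriv (fun t : ℝ => f (x + t • v)) = fun t => fderiv ℝ f (x + t • v) v := by
    funext t
    exact ((hf.differentiable two_ne_zero _).hasFDerivAt.comp_hasDerivAt t (hline t)).deriv
  have hf' : Differentiable ℝ (fderiv ℝ f) :=
    (hf.fderiv_right (m := 1) (by norm_num)).differentiable one_ne_zero
  rw [iteratedDeriv_succ, iteratedDeriv_one, hderiv, iteratedFDeriv_two_apply]
  simpa using (((hf' _).hasFDerivAt.comp_hasDerivAt 0 (hline 0)).clm_apply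
    (hasDerivAt_const 0 v)).deriv

lemma iteratedDeriv_two_nonneg_of_isLocalMin {f : ℝ → ℝ} {a : ℝ} (hf : ContinuousAt f a)
    (h : IsLocalMin f a) : 0 ≤ iteratedDeriv 2 f a := by
  rw [iteratedDeriv_succ, iteratedDeriv_one]
  by_contra! hneg
  have hmax : IsLocalMax f a := isLocalMax_of_deriv_deriv_neg hneg h.deriv_eq_zero hf
  have hconst : f =ᶠ[𝓝 a] fun _ => f a := by
    filter_upwards [h, hmax] with x hmin hmax using le_antisymm hmax hmin
  have hzero : deriv (deriv f) a = 0 := by simpa using hconst.deriv.deriv_eq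
  exact hneg.ne hzero

lemma iteratedDeriv_two_exp_neg_mul_quadratic (α r c : ℝ) :
    iteratedDeriv 2 (fun t : ℝ => exp (-α * (r + 2 * t * c + t ^ 2))) 0
      = (4 * α ^ 2 * c ^ 2 - 2 * α) * exp (-α * r) := by
  have hquad (t : ℝ) : HasDerivAt (fun t : ℝ => -α * (r + 2 * t * c + t ^ 2))
      (-α * (2 * c + 2 * t)) t := by
    have := ((((hasDerivAt_id t).const_mul 2).mul_const c).const_add r).add
      ((hasDerivAt_id t).pow 2)
    exact (this.const_mul (-α)).congr_deriv (by simp)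
  have hlin : HasDerivAt (fun t : ℝ => -α * (2 * c + 2 * t)) (-α * 2) 0 := by
    simpa using (((hasDerivAt_id (0 : ℝ)).const_mul 2).const_add (2 * c)).const_mul (-α)
  rw [iteratedDeriv_succ, iteratedDeriv_one, funext fun t => (hquad t).exp.deriv]
  refine ((hquad 0).exp.mul hlin).deriv.trans ?_
  simp only [mul_zero, zero_mul, add_zero, ne_eq, OfNat.ofNat_ne_zero, not_false_eq_true, zero_pow]
  ring

lemma lap_eq_laplacian {d : ℕ} {f : EuclideanSpace ℝ (Fin d) → ℝ} (hf : ContDiff ℝ 2 f)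
    (x : EuclideanSpace ℝ (Fin d)) : lap f x = Δ f x := by
  simp only [InnerProductSpace.laplacian_eq_iteratedFDeriv_orthonormalBasis f
    (EuclideanSpace.basisFun (Fin d) ℝ), EuclideanSpace.basisFun_apply, lap, secondDirDeriv,
    iteratedDeriv_two_comp_add_smul hf]

variable {E : Type*} [NormedAddCommGroup E] [InnerProductSpace ℝ E]

lemma contDiff_exp_neg_mul_norm_sub_sq (α : ℝ) (z : E) {k : ℕ∞} :
    ContDiff ℝ k fun x => exp (-α * ‖x - z‖ ^ 2) :=
  (contDiff_const.mul ((contDiff_id.sub contDiff_const).norm_sq ℝ)).exp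

variable [FiniteDimensional ℝ E]

lemma laplacian_eq_sum_iteratedDeriv {F : Type*} [NormedAddCommGroup F] [NormedSpace ℝ F]
    {f : E → F} (hf : ContDiff ℝ 2 f) (x : E) :
    Δ f x = ∑ i, iteratedDeriv 2 (fun t : ℝ => f (x + t • stdOrthonormalBasis ℝ E i)) 0 := by
  simp only [InnerProductSpace.laplacian_eq_iteratedFDeriv_stdOrthonormalBasis,
    iteratedDeriv_two_comp_add_smul hf]

lemma laplacian_comp_add_right {F : Type*} [NormedAddCommGroup F] [NormedSpace ℝ F]
    (f : E → F) (v x : E) : Δ (fun y => f (y + v)) x = Δ f (x + v) := by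
  simp only [InnerProductSpace.laplacian_eq_iteratedFDeriv_stdOrthonormalBasis,
    iteratedFDeriv_comp_add_right]

lemma laplacian_nonneg_of_isLocalMin {f : E → ℝ} (hf : ContDiff ℝ 2 f) {x : E}
    (h : IsLocalMin f x) : 0 ≤ Δ f x := by
  rw [laplacian_eq_sum_iteratedDeriv hf]
  refine Finset.sum_nonneg fun i _ => ?_
  set v := stdOrthonormalBasis ℝ E i
  have hline : Continuous fun t : ℝ => x + t • v := by fun_prop
  have hmin : IsLocalMin f (x + (0 : ℝ) • v) := by rwa [zero_smul, add_zero]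
  exact iteratedDeriv_two_nonneg_of_isLocalMin (hf.continuous.comp hline).continuousAt
    (hmin.comp_continuous (g := fun t : ℝ => x + t • v) hline.continuousAt)

lemma nonneg_of_laplacian_neg {f : E → ℝ} (hf : ContDiff ℝ 2 f) {K : Set E} (hK : IsCompact K)
    (hout : ∀ x ∉ K, 0 ≤ f x) (hlap : ∀ x, f x < 0 → Δ f x < 0) (x : E) : 0 ≤ f x := by
  by_contra! hx
  obtain ⟨y, -, hy⟩ := hK.exists_isMinOn ⟨x, by_contra fun h => (hout x h).not_gt hx⟩
    hf.continuous.continuousOn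
  have hyx : f y ≤ f x := hy (by_contra fun h => (hout x h).not_gt hx)
  have hmin : IsLocalMin f y := .of_forall fun p => by
    by_cases hp : p ∈ K
    · exact hy hp
    · exact (hyx.trans hx.le).trans (hout p hp)
  exact (laplacian_nonneg_of_isLocalMin hf hmin).not_gt (hlap y (hyx.trans_lt hx))

lemma laplacian_exp_neg_mul_norm_sub_sq (α : ℝ) (z x : E) :
    Δ (fun y => exp (-α * ‖y - z‖ ^ 2)) x
      = (4 * α ^ 2 * ‖x - z‖ ^ 2 - 2 * α * Module.finrank ℝ E) * exp (-α * ‖x - z‖ ^ 2) := by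
  have hline (i) (t : ℝ) : ‖x + t • stdOrthonormalBasis ℝ E i - z‖ ^ 2
      = ‖x - z‖ ^ 2 + 2 * t * ⟪x - z, stdOrthonormalBasis ℝ E i⟫_ℝ + t ^ 2 := by
    rw [add_sub_right_comm, norm_add_sq_real, inner_smul_right, norm_smul,
      (stdOrthonormalBasis ℝ E).norm_eq_one, mul_one, norm_eq_abs, sq_abs, mul_assoc]
  rw [laplacian_eq_sum_iteratedDeriv (contDiff_exp_neg_mul_norm_sub_sq α z)]
  simp only [hline, iteratedDeriv_two_exp_neg_mul_quadratic]
  rw [← Finset.sum_mul, Finset.sum_sub_distrib, ← Finset.mul_sum,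
    (stdOrthonormalBasis ℝ E).sum_sq_inner_left]
  simp [mul_comm]

end Laplacian

section StrongMaximumPrinciple

variable {E : Type*} [NormedAddCommGroup E]

/-- Hopf's barrier: a radial Gaussian of rate `α` centred at `z`, shifted by a constant so as to
vanish on the sphere of radius `R`. For large `α` it is strictly subharmonic near that sphere. -/
noncomputable def hopfBarrier (α R : ℝ) (z x : E) : ℝ :=
  exp (-α * ‖x - z‖ ^ 2) - exp (-α * R ^ 2)

lemma hopfBarrier_le_one {α : ℝ} (hα : 0 ≤ α) (R : ℝ) (z x : E) : hopfBarrier α R z x ≤ 1 := by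
  have hle : exp (-α * ‖x - z‖ ^ 2) ≤ 1 := exp_le_one_iff.2 (by nlinarith [sq_nonneg ‖x - z‖])
  unfold hopfBarrier
  linarith [exp_pos (-α * R ^ 2)]

lemma hopfBarrier_nonpos {α R : ℝ} (hα : 0 ≤ α) (hR : 0 ≤ R) {z x : E} (hx : R ≤ ‖x - z‖) :
    hopfBarrier α R z x ≤ 0 := by
  have hsq : R ^ 2 ≤ ‖x - z‖ ^ 2 := pow_le_pow_left₀ hR hx 2
  exact sub_nonpos.2 (exp_le_exp.2 (by nlinarith))

lemma hopfBarrier_eq_zero (α : ℝ) {R : ℝ} {z x : E} (hx : ‖x - z‖ = R) :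
    hopfBarrier α R z x = 0 := by
  rw [hopfBarrier, hx, sub_self]

variable [InnerProductSpace ℝ E]

lemma contDiff_hopfBarrier (α R : ℝ) (z : E) {k : ℕ∞} : ContDiff ℝ k (hopfBarrier α R z) :=
  (contDiff_exp_neg_mul_norm_sub_sq α z).sub contDiff_const

lemma fderiv_hopfBarrier_apply_sub (α R : ℝ) (z x : E) :
    fderiv ℝ (hopfBarrier α R z) x (x - z)
      = -(2 * α * ‖x - z‖ ^ 2 * exp (-α * ‖x - z‖ ^ 2)) := by
  have hderiv : HasFDerivAt (hopfBarrier α R z) _ x :=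
    ((((hasFDerivAt_id x).sub_const z).norm_sq.const_mul (-α)).exp).sub_const (exp (-α * R ^ 2))
  rw [hderiv.fderiv]
  simp only [smul_apply, ContinuousLinearMap.comp_apply, innerSL_apply_apply,
    ContinuousLinearMap.id_apply, real_inner_self_eq_norm_sq, id_eq, smul_eq_mul, nsmul_eq_mul]
  ring

variable [FiniteDimensional ℝ E]

lemma exists_mul_hopfBarrier_lt_laplacian {L : ℝ} (hL : 0 ≤ L) {R : ℝ} (hR : 0 < R) :
    ∃ α > 0, ∀ z x : E, R / 2 ≤ ‖x - z‖ →
      L * hopfBarrier α R z x < Δ (hopfBarrier α R z) x := by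
  set d : ℝ := (Module.finrank ℝ E : ℝ)
  have hR2 : 0 < R ^ 2 := by positivity
  obtain ⟨α, hα, hαR⟩ : ∃ α : ℝ, 1 ≤ α ∧ α * R ^ 2 = L + 2 * d + 1 + R ^ 2 :=
    ⟨(L + 2 * d + 1) / R ^ 2 + 1, le_add_of_nonneg_left (by positivity), by field_simp⟩
  refine ⟨α, by linarith, fun z x hx => ?_⟩
  have hlap : Δ (hopfBarrier α R z) x
      = (4 * α ^ 2 * ‖x - z‖ ^ 2 - 2 * α * d) * exp (-α * ‖x - z‖ ^ 2) := by
    refine ((contDiff_exp_neg_mul_norm_sub_sq α z).contDiffAt.laplacian_sub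
      contDiffAt_const).trans ?_
    rw [laplacian_exp_neg_mul_norm_sub_sq, InnerProductSpace.laplacian_const, Pi.zero_apply,
      sub_zero]
  have hnorm : R ^ 2 ≤ 4 * ‖x - z‖ ^ 2 := by nlinarith
  have hcoeff : L < 4 * α ^ 2 * ‖x - z‖ ^ 2 - 2 * α * d := by
    have hd : (0 : ℝ) ≤ d := Nat.cast_nonneg _
    nlinarith [mul_le_mul_of_nonneg_left hnorm (sq_nonneg α)]
  calc L * hopfBarrier α R z x ≤ L * exp (-α * ‖x - z‖ ^ 2) :=
        mul_le_mul_of_nonneg_left (sub_le_self _ (exp_pos _).le) hL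
    _ < Δ (hopfBarrier α R z) x := by
        rw [hlap]
        exact mul_lt_mul_of_pos_right hcoeff (exp_pos _)

lemma exists_mul_hopfBarrier_le {w : E → ℝ} (hw : ContDiff ℝ 2 w) (hw0 : ∀ x, 0 ≤ w x) {L : ℝ}
    (hL : 0 ≤ L) (hlap : ∀ x, Δ w x ≤ L * w x) {α R : ℝ} (hα : 0 ≤ α) (hR : 0 < R) {z : E}
    (hbarrier : ∀ x, R / 2 ≤ ‖x - z‖ → L * hopfBarrier α R z x < Δ (hopfBarrier α R z) x)
    (hpos : ∀ x ∈ Metric.ball z R, 0 < w x) :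
    ∃ c > 0, ∀ x, c * hopfBarrier α R z x ≤ w x := by
  obtain ⟨xm, hxm, hmin⟩ := (isCompact_closedBall z (R / 2)).exists_isMinOn
    (Metric.nonempty_closedBall.2 (by positivity)) hw.continuous.continuousOn
  have hc : 0 < w xm := hpos _ (Metric.closedBall_subset_ball (by linarith) hxm)
  refine ⟨w xm, hc, fun x => ?_⟩
  set c := w xm
  have hb : ContDiff ℝ 2 (hopfBarrier α R z) := contDiff_hopfBarrier α R z
  have hcb : ContDiff ℝ 2 (c • hopfBarrier α R z) := contDiff_const.smul hb
  -- The difference `w - c * hopfBarrier` is nonnegative outside the ball by the sign of the barrier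
  -- and on the half ball by the choice of `c`; in between, its Laplacian is negative at
  -- every point where it is negative itself.
  refine sub_nonneg.1 (nonneg_of_laplacian_neg (hw.sub hcb) (isCompact_closedBall z R)
    (fun p hp => sub_nonneg.2 ?_) (fun p hp => ?_) x)
  · rw [Metric.mem_closedBall, dist_eq_norm, not_le] at hp
    exact (mul_nonpos_of_nonneg_of_nonpos hc.le (hopfBarrier_nonpos hα hR.le hp.le)).trans (hw0 p)
  have hp' : w p < c * hopfBarrier α R z p := sub_neg.1 hp
  have hfar : R / 2 ≤ ‖p - z‖ := by
    by_contra! hnear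
    have hcw : c ≤ w p := hmin (by rw [Metric.mem_closedBall, dist_eq_norm]; exact hnear.le)
    nlinarith [hopfBarrier_le_one hα R z p]
  calc Δ (w - c • hopfBarrier α R z) p
      = Δ w p - c * Δ (hopfBarrier α R z) p := by
        rw [hw.contDiffAt.laplacian_sub hcb.contDiffAt,
          InnerProductSpace.laplacian_smul _ hb.contDiffAt, smul_eq_mul]
    _ < L * (c * hopfBarrier α R z p) - c * (L * hopfBarrier α R z p) := by
        linarith [(hlap p).trans (mul_le_mul_of_nonneg_left hp'.le hL),
          mul_lt_mul_of_pos_left (hbarrier p hfar) hc]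
    _ = 0 := by ring

lemma ne_zero_of_pos_on_ball {w : E → ℝ} (hw : ContDiff ℝ 2 w) (hw0 : ∀ x, 0 ≤ w x) {L : ℝ}
    (hL : 0 ≤ L) (hlap : ∀ x, Δ w x ≤ L * w x) {y z : E} (hyz : y ≠ z)
    (hpos : ∀ x ∈ Metric.ball z ‖y - z‖, 0 < w x) : w y ≠ 0 := by
  intro hwy
  have hR : 0 < ‖y - z‖ := norm_sub_pos_iff.2 hyz
  obtain ⟨α, hα, hbarrier⟩ := exists_mul_hopfBarrier_lt_laplacian (E := E) hL hR
  obtain ⟨c, hc, hle⟩ := exists_mul_hopfBarrier_le hw hw0 hL hlap hα.le hR (hbarrier z) hpos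
  have hbC : Differentiable ℝ (hopfBarrier α ‖y - z‖ z) :=
    (contDiff_hopfBarrier α _ z (k := 1)).differentiable one_ne_zero
  have hw' : fderiv ℝ w y = 0 :=
    IsLocalMin.fderiv_eq_zero (.of_forall fun x => hwy.trans_le (hw0 x))
  have hdiff : fderiv ℝ (w - c • hopfBarrier α ‖y - z‖ z) y = 0 := by
    refine IsLocalMin.fderiv_eq_zero (.of_forall fun x => ?_)
    simpa [hwy, hopfBarrier_eq_zero] using hle x
  rw [fderiv_sub (hw.differentiable two_ne_zero y) ((hbC y).const_smul c), hw', zero_sub,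
    neg_eq_zero, fderiv_const_smul (hbC y), smul_eq_zero_iff_right hc.ne'] at hdiff
  have hslope := fderiv_hopfBarrier_apply_sub α ‖y - z‖ z y
  rw [hdiff, zero_apply, eq_comm, neg_eq_zero] at hslope
  exact (by positivity : 2 * α * ‖y - z‖ ^ 2 * exp (-α * ‖y - z‖ ^ 2) ≠ 0) hslope

theorem eq_zero_of_laplacian_le {w : E → ℝ} (hw : ContDiff ℝ 2 w) (hw0 : ∀ x, 0 ≤ w x) {L : ℝ}
    (hlap : ∀ x, Δ w x ≤ L * w x) {y : E} (hy : w y = 0) (x : E) : w x = 0 := by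
  by_contra hx
  have hclosed : IsClosed {p | w p = 0} := isClosed_eq hw.continuous continuous_const
  obtain ⟨p, hp, hdist⟩ := hclosed.exists_infDist_eq_dist ⟨y, hy⟩ x
  refine ne_zero_of_pos_on_ball hw hw0 (abs_nonneg L)
    (fun q => (hlap q).trans (mul_le_mul_of_nonneg_right (le_abs_self L) (hw0 q)))
    (y := p) (z := x) (by rintro rfl; exact hx hp) (fun q hq => (hw0 q).lt_of_ne' fun hwq => ?_) hp
  have hle : dist x p ≤ dist x q := hdist ▸ Metric.infDist_le_dist_of_mem hwq
  rw [Metric.mem_ball, ← dist_eq_norm, dist_comm, dist_comm p] at hq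
  exact hq.not_ge hle

end StrongMaximumPrinciple

section Nonlinearity

/-- The hypotheses on the nonlinearity `f` of `Δu = f(u)` under which two solutions can be compared
through their quotient: besides regularity and oddness, the monotonicity of `s ↦ f s / s` introduced
by Brezis and Oswald. -/
structure IsBrezisOswald (f : ℝ → ℝ) : Prop where
  odd : f.Odd
  exists_lipschitzOnWith : ∃ K : ℝ≥0, LipschitzOnWith K f (Icc (-1) 1)
  strictMonoOn_div : StrictMonoOn (fun s => f s / s) (Ioc 0 1)

lemma IsBrezisOswald.mul_lt {f : ℝ → ℝ} (hf : IsBrezisOswald f) {m q : ℝ} (hq : 0 < q)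
    (hm : 1 < m) (hmq : m * q ≤ 1) : m * f q < f (m * q) := by
  have hlt : q < m * q := lt_mul_of_one_lt_left hq hm
  have hmq0 : 0 < m * q := hq.trans hlt
  have hdiv : f q / q < f (m * q) / (m * q) :=
    hf.strictMonoOn_div ⟨hq, hlt.le.trans hmq⟩ ⟨hmq0, hmq⟩ hlt
  calc m * f q = f q / q * (m * q) := by field_simp
    _ < f (m * q) := (lt_div_iff₀ hmq0).1 hdiv

lemma strictMonoOn_Ioc_of_strictMonoOn_Ioo {f : ℝ → ℝ} {a b : ℝ} (hf : StrictMonoOn f (Ioo a b))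
    (hb : ContinuousWithinAt f (Iio b) b) : StrictMonoOn f (Ioc a b) := by
  intro x hx y hy hxy
  rcases hy.2.lt_or_eq with hyb | rfl
  · exact hf ⟨hx.1, hxy.trans hyb⟩ ⟨hy.1, hyb⟩ hxy
  obtain ⟨c, hxc, hcy⟩ := exists_between hxy
  have hc : c ∈ Ioo a y := ⟨hx.1.trans hxc, hcy⟩
  refine (hf ⟨hx.1, hxy⟩ hc hxc).trans_le (ge_of_tendsto hb ?_)
  filter_upwards [Ioo_mem_nhdsLT hcy] with t ht using
    (hf hc ⟨hc.1.trans ht.1, ht.2⟩ ht.1).le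

lemma odd_deriv_of_even {f : ℝ → ℝ} (hf : f.Even) : (deriv f).Odd := fun x => by
  simpa only [hf _, neg_neg] using deriv_comp_neg f (-x)

lemma IsDoubleWell.contDiff_deriv {W : ℝ → ℝ} (hW : IsDoubleWell W) : ContDiff ℝ 1 (deriv W) :=
  (contDiff_succ_iff_deriv.1 (hW.smooth.of_le (m := 1 + 1) (by norm_cast))).2.2

lemma IsDoubleWell.isBrezisOswald_const_mul_deriv {W : ℝ → ℝ} (hW : IsDoubleWell W) {c : ℝ}
    (hc : 0 < c) : IsBrezisOswald fun s => c * deriv W s where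
  odd := (odd_deriv_of_even hW.even).const_smul c
  exists_lipschitzOnWith :=
    (contDiff_const.mul hW.contDiff_deriv).contDiffOn.exists_lipschitzOnWith one_ne_zero
      (convex_Icc (-1) 1) isCompact_Icc
  strictMonoOn_div := by
    have hcont : ContinuousAt (fun s => deriv W s / s) 1 :=
      hW.contDiff_deriv.continuous.continuousAt.div continuousAt_id one_ne_zero
    have hmono := strictMonoOn_Ioc_of_strictMonoOn_Ioo hW.mono hcont.continuousWithinAt
    intro x hx y hy hxy
    simpa only [mul_div_assoc] using mul_lt_mul_of_pos_left (hmono hx hy hxy) hc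

end Nonlinearity

section Lattice

variable {E : Type*} [NormedAddCommGroup E] [NormedSpace ℝ E] [FiniteDimensional ℝ E]
  {Λ : AddSubgroup E}

lemma exists_forall_exists_norm_sub_le (hΛ : Submodule.span ℝ (Λ : Set E) = ⊤) :
    ∃ R, ∀ x, ∃ l ∈ Λ, ‖x - l‖ ≤ R := by
  let b := Module.Basis.ofSpan hΛ.ge
  have := FiniteDimensional.fintypeBasisIndex b
  have hspan : Submodule.span ℤ (range b) ≤ AddSubgroup.toIntSubmodule Λ :=
    Submodule.span_le.2 (Module.Basis.ofSpan_subset hΛ.ge)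
  exact ⟨∑ i, ‖b i‖, fun x => ⟨ZSpan.floor b x, hspan (ZSpan.floor b x).2,
    ZSpan.norm_fract_le b x⟩⟩

lemma hausdorffEDist_ne_top_of_add_mem (hΛ : Submodule.span ℝ (Λ : Set E) = ⊤) {A B : Set E}
    (hA : A.Nonempty) (hB : B.Nonempty) (hAΛ : ∀ l ∈ Λ, ∀ x ∈ A, x + l ∈ A)
    (hBΛ : ∀ l ∈ Λ, ∀ x ∈ B, x + l ∈ B) : Metric.hausdorffEDist A B ≠ ⊤ := by
  obtain ⟨R, hR⟩ := exists_forall_exists_norm_sub_le hΛ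
  have hnear {S : Set E} (hSΛ : ∀ l ∈ Λ, ∀ x ∈ S, x + l ∈ S) {p : E} (hp : p ∈ S) (x : E) :
      ∃ y ∈ S, edist x y ≤ ENNReal.ofReal R := by
    obtain ⟨l, hl, hle⟩ := hR (x - p)
    refine ⟨p + l, hSΛ l hl p hp, ?_⟩
    rw [edist_dist, dist_eq_norm, ← sub_sub]
    exact ENNReal.ofReal_le_ofReal hle
  obtain ⟨a, ha⟩ := hA
  obtain ⟨b, hb⟩ := hB
  exact ne_top_of_le_ne_top ENNReal.ofReal_ne_top (Metric.hausdorffEDist_le_of_mem_edist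
    (fun x _ => hnear hBΛ hb x) (fun x _ => hnear hAΛ ha x))

lemma exists_isMaxOn_of_periodic (hΛ : Submodule.span ℝ (Λ : Set E) = ⊤) {S : Set E}
    (hS : IsClosed S) (hne : S.Nonempty) (hSΛ : ∀ l ∈ Λ, ∀ x ∈ S, x + l ∈ S) {φ : E → ℝ}
    (hφ : ContinuousOn φ S) (hφΛ : ∀ l ∈ Λ, Function.Periodic φ l) : ∃ x ∈ S, IsMaxOn φ S x := by
  obtain ⟨R, hR⟩ := exists_forall_exists_norm_sub_le hΛ
  have hreduce (x : E) (hx : x ∈ S) : ∃ y ∈ S ∩ Metric.closedBall 0 R, φ y = φ x := by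
    obtain ⟨l, hl, hle⟩ := hR x
    rw [sub_eq_add_neg] at hle
    exact ⟨x + -l, ⟨hSΛ _ (neg_mem hl) x hx, mem_closedBall_zero_iff.2 hle⟩,
      hφΛ _ (neg_mem hl) x⟩
  obtain ⟨x₀, hx₀⟩ := hne
  obtain ⟨y₀, hy₀, -⟩ := hreduce x₀ hx₀
  obtain ⟨y, hy, hmax⟩ := ((isCompact_closedBall (0 : E) R).inter_left hS).exists_isMaxOn ⟨y₀, hy₀⟩
    (hφ.mono inter_subset_left)
  refine ⟨y, hy.1, fun x hx => ?_⟩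
  obtain ⟨p, hp, hpx⟩ := hreduce x hx
  exact hpx.symm.trans_le (hmax hp)

lemma isOpen_setOf_forall_lt_of_periodic (hΛ : Submodule.span ℝ (Λ : Set E) = ⊤)
    {φ : E → ℝ} (hφ : Continuous φ) (hφΛ : ∀ l ∈ Λ, Function.Periodic φ l) :
    IsOpen {v | ∀ x, φ x + φ (x + v) < 0} := by
  obtain ⟨R, hR⟩ := exists_forall_exists_norm_sub_le hΛ
  have hreduce : {v | ∀ x, φ x + φ (x + v) < 0}
      = {v | ∀ x ∈ Metric.closedBall 0 R, φ x + φ (x + v) < 0} := by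
    refine subset_antisymm (fun v hv x _ => hv x) (fun v hv x => ?_)
    obtain ⟨l, hl, hle⟩ := hR x
    rw [← (hφΛ l hl).sub_eq x, ← (hφΛ l hl).sub_eq (x + v), add_sub_right_comm]
    exact hv _ (mem_closedBall_zero_iff.2 hle)
  rw [hreduce, isOpen_iff_eventually]
  intro v hv
  refine (isCompact_closedBall (0 : E) R).eventually_forall_of_forall_eventually fun x hx => ?_
  have hcont : Continuous fun p : E × E => φ p.2 + φ (p.2 + p.1) := by fun_prop
  exact hcont.continuousAt.eventually_lt_const (hv x hx)

end Lattice

section PeriodicSolutions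

lemma exists_add_translate_neg_of_antiperiodic {E : Type*} [AddCommGroup E] [TopologicalSpace E]
    [PreconnectedSpace E] {g u : E → ℝ} {e : E} (hg : Continuous g)
    (hge : Function.Antiperiodic g e) (hneg : ∀ x, 0 ≤ g x → u x < 0) (v : E) :
    ∃ y, u y + u (y + v) < 0 := by
  have hge0 := hge 0
  obtain ⟨p, hp⟩ : (0 : ℝ) ∈ range g := by
    rcases le_total 0 (g 0) with h0 | h0
    · exact mem_range_of_exists_le_of_exists_ge hg ⟨0 + e, by linarith⟩ ⟨0, h0⟩
    · exact mem_range_of_exists_le_of_exists_ge hg ⟨0, h0⟩ ⟨0 + e, by linarith⟩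
  rcases le_total 0 (g (p + v)) with hv | hv
  · exact ⟨p, add_neg (hneg p hp.ge) (hneg _ hv)⟩
  · refine ⟨p + e, add_neg (hneg _ ?_) (hneg _ ?_)⟩
    · rw [hge, hp, neg_zero]
    · rw [add_right_comm, hge]
      exact neg_nonneg.2 hv

variable {E : Type*} [NormedAddCommGroup E] [InnerProductSpace ℝ E] [FiniteDimensional ℝ E]

/-- Solutions `u : E / Λ → [-1, 1]` of the semilinear equation `Δu = f(u)` on the quotient of a
Euclidean space by a group of translations, encoded as `Λ`-periodic functions on `E`. -/
structure IsPeriodicSolution (Λ : AddSubgroup E) (f : ℝ → ℝ) (u : E → ℝ) : Prop where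
  contDiff : ContDiff ℝ 2 u
  mem_Icc : ∀ x, u x ∈ Icc (-1) 1
  periodic : ∀ l ∈ Λ, Function.Periodic u l
  laplacian_eq : ∀ x, Δ u x = f (u x)

namespace IsPeriodicSolution

variable {Λ : AddSubgroup E} {f : ℝ → ℝ} {u : E → ℝ}

lemma neg (hf : f.Odd) (hu : IsPeriodicSolution Λ f u) : IsPeriodicSolution Λ f (-u) where
  contDiff := hu.contDiff.neg
  mem_Icc x := ⟨neg_le_neg (hu.mem_Icc x).2, neg_le.1 (hu.mem_Icc x).1⟩
  periodic l hl x := congrArg Neg.neg (hu.periodic l hl x)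
  laplacian_eq x := by
    rw [InnerProductSpace.laplacian_neg, Pi.neg_apply, Pi.neg_apply, hf, hu.laplacian_eq]

lemma contDiff_translate (hu : IsPeriodicSolution Λ f u) (v : E) :
    ContDiff ℝ 2 fun x => u (x + v) :=
  hu.contDiff.comp (contDiff_id.add contDiff_const)

lemma laplacian_const_mul_sub_translate (hu : IsPeriodicSolution Λ f u) (a : ℝ) (v x : E) :
    Δ (fun y => a * u y - u (y + v)) x = a * f (u x) - f (u (x + v)) := by
  refine ((contDiff_const.mul hu.contDiff).contDiffAt.laplacian_sub
    (hu.contDiff_translate v).contDiffAt).trans ?_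
  rw [laplacian_comp_add_right, hu.laplacian_eq, ← hu.laplacian_eq x]
  exact congrArg (· - _) (InnerProductSpace.laplacian_smul a hu.contDiff.contDiffAt)

lemma contDiff_const_mul_sub_translate (hu : IsPeriodicSolution Λ f u) (a : ℝ) (v : E) :
    ContDiff ℝ 2 fun y => a * u y - u (y + v) :=
  (contDiff_const.mul hu.contDiff).sub (hu.contDiff_translate v)

lemma add_translate_neg (hf : IsBrezisOswald f) (hu : IsPeriodicSolution Λ f u) {v : E}
    (hle : ∀ x, u x + u (x + v) ≤ 0) {y : E} (hy : u y + u (y + v) < 0) (x : E) :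
    u x + u (x + v) < 0 := by
  refine (hle x).lt_of_ne fun hx => ?_
  obtain ⟨K, hK⟩ := hf.exists_lipschitzOnWith
  have hw0 (p : E) : 0 ≤ -1 * u p - u (p + v) := by linarith [hle p]
  have hlap (p : E) :
      Δ (fun q => -1 * u q - u (q + v)) p ≤ K * (-1 * u p - u (p + v)) := by
    have hdist := hK.dist_le_mul (-1 * u p) (by grind [hu.mem_Icc p]) _ (hu.mem_Icc (p + v))
    rw [dist_eq, dist_eq, abs_of_nonneg (hw0 p), neg_one_mul, hf.odd] at hdist
    rw [hu.laplacian_const_mul_sub_translate]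
    linarith [le_abs_self (-f (u p) - f (u (p + v)))]
  have hzero := eq_zero_of_laplacian_le (hu.contDiff_const_mul_sub_translate (-1) v) hw0 hlap
    (y := x) (by linarith) y
  linarith

section Antiperiodic

variable {g : E → ℝ} {e : E}

lemma add_translate_nonpos_of_nonneg (hΛ : Submodule.span ℝ (Λ : Set E) = ⊤)
    (hf : IsBrezisOswald f) (hu : IsPeriodicSolution Λ f u) (hg : Continuous g)
    (hgΛ : ∀ l ∈ Λ, Function.Periodic g l) (hge : Function.Antiperiodic g e)
    (hneg : ∀ x, 0 ≤ g x → u x < 0) {x : E} (hx : 0 ≤ g x) : u x + u (x + e) ≤ 0 := by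
  by_contra! hpos
  have hratio : ContinuousOn (fun y => u (y + e) / -u y) {y | 0 ≤ g y} :=
    (hu.contDiff_translate e).continuous.continuousOn.div hu.contDiff.continuous.neg.continuousOn
      fun y hy => (neg_pos.2 (hneg y hy)).ne'
  obtain ⟨p, hp, hmax⟩ := exists_isMaxOn_of_periodic hΛ (isClosed_le continuous_const hg)
    ⟨x, hx⟩ (fun l hl y hy => hy.trans_eq (hgΛ l hl y).symm) hratio
    (fun l hl y => by rw [add_right_comm, hu.periodic l hl, hu.periodic l hl])
  -- If the largest ratio `m` exceeds `1`, then `-m * u - u (· + e)` attains its minimum `0` at an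
  -- interior point `p`, where its Laplacian is `m * f (-u p) - f (m * -u p) < 0`.
  obtain ⟨m, hm⟩ : ∃ m, m = u (p + e) / -u p := ⟨_, rfl⟩
  have hle (y : E) (hy : 0 ≤ g y) : 0 ≤ -m * u y - u (y + e) := by
    have := (div_le_iff₀ (neg_pos.2 (hneg y hy))).1 ((hmax hy).trans_eq hm.symm)
    linarith
  have hup : 0 < -u p := neg_pos.2 (hneg p hp)
  have heq : u (p + e) = m * -u p := by rw [hm, div_mul_cancel₀ _ hup.ne']
  have hm1 : 1 < m := by nlinarith [hle x hx, hneg x hx]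
  have hgp : 0 < g p := by
    refine hp.lt_of_ne fun h0 => ?_
    have hneg' := hneg (p + e) (by rw [hge, ← h0, neg_zero])
    nlinarith
  have hmin : IsLocalMin (fun y => -m * u y - u (y + e)) p := by
    filter_upwards [hg.continuousAt.eventually_const_lt hgp] with y hy
    rw [heq, show -m * u p - m * -u p = 0 by ring]
    exact hle y hy.le
  have hlap := laplacian_nonneg_of_isLocalMin (hu.contDiff_const_mul_sub_translate (-m) e) hmin
  rw [hu.laplacian_const_mul_sub_translate, heq, neg_mul_comm, ← hf.odd] at hlap
  linarith [hf.mul_lt hup hm1 (heq ▸ (hu.mem_Icc _).2)]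

lemma add_translate_nonpos (hΛ : Submodule.span ℝ (Λ : Set E) = ⊤)
    (hf : IsBrezisOswald f) (hu : IsPeriodicSolution Λ f u) (hg : Continuous g)
    (hgΛ : ∀ l ∈ Λ, Function.Periodic g l) (hge : Function.Antiperiodic g e) (he : e + e ∈ Λ)
    (hneg : ∀ x, 0 ≤ g x → u x < 0) (x : E) : u x + u (x + e) ≤ 0 := by
  rcases le_total 0 (g x) with hx | hx
  · exact hu.add_translate_nonpos_of_nonneg hΛ hf hg hgΛ hge hneg hx
  · have hshift := hu.add_translate_nonpos_of_nonneg hΛ hf hg hgΛ hge hneg (x := x + e)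
      (by rw [hge]; exact neg_nonneg.2 hx)
    rwa [add_assoc, hu.periodic _ he, add_comm] at hshift

theorem neg_of_antiperiodic (hΛ : Submodule.span ℝ (Λ : Set E) = ⊤)
    (hf : IsBrezisOswald f) (hu : IsPeriodicSolution Λ f u) (hg : Continuous g)
    (hgΛ : ∀ l ∈ Λ, Function.Periodic g l) (hge : Function.Antiperiodic g e) (he : e + e ∈ Λ)
    (hneg : ∀ x, 0 ≤ g x → u x < 0) (x : E) : u x < 0 := by
  have hstrict (v : E) (hv : ∀ x, u x + u (x + v) ≤ 0) : ∀ x, u x + u (x + v) < 0 :=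
    hu.add_translate_neg hf hv (exists_add_translate_neg_of_antiperiodic hg hge hneg v).choose_spec
  -- The set of `v` with `u + u (· + v) ≤ 0` is clopen and contains `e`, so it contains `0`.
  have hclosed : IsClosed {v | ∀ x, u x + u (x + v) ≤ 0} := by
    simp only [ofPred_forall]
    exact isClosed_iInter fun x => isClosed_le
      (continuous_const.add (hu.contDiff.continuous.comp (continuous_const.add continuous_id)))
      continuous_const
  have hopen : IsOpen {v | ∀ x, u x + u (x + v) ≤ 0} := by
    convert isOpen_setOf_forall_lt_of_periodic hΛ hu.contDiff.continuous hu.periodic using 3 with v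
    exact ⟨hstrict v, fun h x => (h x).le⟩
  have huniv := IsClopen.eq_univ ⟨hclosed, hopen⟩
    ⟨e, hu.add_translate_nonpos hΛ hf hg hgΛ hge he hneg⟩
  have hzero := hstrict 0 (huniv.ge (mem_univ 0)) x
  rw [add_zero] at hzero
  linarith

end Antiperiodic

end IsPeriodicSolution

end PeriodicSolutions

section Sheets

lemma exists_int_abs_add_le_of_cos_nonneg {t : ℝ} (ht : 0 ≤ cos t) :
    ∃ k : ℤ, |t + k * (2 * π)| ≤ π / 2 := by
  have habs : |(t : Angle).toReal| ≤ π / 2 := by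
    rwa [← Angle.cos_nonneg_iff_abs_toReal_le_pi_div_two, Angle.cos_coe]
  refine ⟨-toIocDiv two_pi_pos (-π) t, ?_⟩
  rwa [Angle.toReal_coe, toIocMod, zsmul_eq_mul, sub_eq_add_neg, ← neg_mul, ← Int.cast_neg] at habs

lemma exists_cos_sub_eq_neg_of_not_antipodal {θ₁ θ₂ : ℝ}
    (h : ¬∃ j : ℤ, θ₂ - θ₁ = π + 2 * π * j) :
    ∃ c, ∃ η > 0, cos (θ₁ - c) = -η ∧ cos (θ₂ - c) = -η := by
  have hcos : cos ((θ₂ - θ₁) / 2) ≠ 0 := fun h0 => by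
    obtain ⟨k, hk⟩ := Real.cos_eq_zero_iff.1 h0
    exact h ⟨k, by linarith⟩
  have h₁ : cos (θ₁ - (θ₁ + θ₂) / 2) = cos ((θ₂ - θ₁) / 2) := by rw [← cos_neg]; ring_nf
  have h₂ : cos (θ₂ - (θ₁ + θ₂) / 2) = cos ((θ₂ - θ₁) / 2) := by ring_nf
  rcases hcos.lt_or_gt with hneg | hpos
  · exact ⟨(θ₁ + θ₂) / 2, -cos ((θ₂ - θ₁) / 2), neg_pos.2 hneg, by rw [h₁, neg_neg],
      by rw [h₂, neg_neg]⟩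
  · exact ⟨(θ₁ + θ₂) / 2 + π, cos ((θ₂ - θ₁) / 2), hpos, by rw [← sub_sub, cos_sub_pi, h₁],
      by rw [← sub_sub, cos_sub_pi, h₂]⟩

variable {E : Type*} [NormedAddCommGroup E]

/-- The preimage `(({θ₁} ∪ {θ₂}) + 2πℤ)` under the linear coordinate `ℓ`: two, possibly equal,
parallel hyperplanes modulo `2π`. -/
def sheetPair [NormedSpace ℝ E] (ℓ : E →L[ℝ] ℝ) (θ₁ θ₂ : ℝ) : Set E :=
  {x | ∃ j : ℤ, ℓ x = θ₁ + 2 * π * j ∨ ℓ x = θ₂ + 2 * π * j}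

section NormedSpace

variable [NormedSpace ℝ E] {Λ : AddSubgroup E} {ℓ : E →L[ℝ] ℝ}

lemma exists_mem_apply_eq_two_pi (hℓ : Λ.map (ℓ : E →+ ℝ) = AddSubgroup.zmultiples (2 * π)) :
    ∃ l ∈ Λ, ℓ l = 2 * π :=
  hℓ.ge (AddSubgroup.mem_zmultiples _)

lemma exists_int_apply_eq (hℓ : Λ.map (ℓ : E →+ ℝ) = AddSubgroup.zmultiples (2 * π)) {l : E}
    (hl : l ∈ Λ) : ∃ k : ℤ, ℓ l = k * (2 * π) := by
  obtain ⟨k, hk⟩ := AddSubgroup.mem_zmultiples_iff.1 (hℓ.le (AddSubgroup.mem_map_of_mem _ hl))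
  exact ⟨k, hk.symm.trans (zsmul_eq_mul _ _)⟩

lemma sheetPair_nonempty (hℓ : ℓ ≠ 0) (θ₁ θ₂ : ℝ) : (sheetPair ℓ θ₁ θ₂).Nonempty := by
  obtain ⟨x, hx⟩ := LinearMap.surjective (f := ℓ.toLinearMap)
    (fun h => hℓ (ContinuousLinearMap.coe_injective h)) θ₁
  exact ⟨x, 0, .inl (by simpa using hx)⟩

lemma add_mem_sheetPair (hℓ : Λ.map (ℓ : E →+ ℝ) = AddSubgroup.zmultiples (2 * π)) {θ₁ θ₂ : ℝ}
    {l : E} (hl : l ∈ Λ) {x : E} (hx : x ∈ sheetPair ℓ θ₁ θ₂) : x + l ∈ sheetPair ℓ θ₁ θ₂ := by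
  obtain ⟨k, hk⟩ := exists_int_apply_eq hℓ hl
  obtain ⟨j, hj⟩ := hx
  refine ⟨j + k, hj.imp (fun hx => ?_) (fun hx => ?_)⟩ <;>
  · rw [map_add, hx, hk]
    push_cast
    ring

lemma cos_sub_eq_of_mem_sheetPair {θ₁ θ₂ c r : ℝ} (h₁ : cos (θ₁ - c) = r)
    (h₂ : cos (θ₂ - c) = r) {x : E} (hx : x ∈ sheetPair ℓ θ₁ θ₂) : cos (ℓ x - c) = r := by
  obtain ⟨j, hx | hx⟩ := hx
  · rw [hx, add_sub_right_comm, mul_comm, cos_add_int_mul_two_pi, h₁]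
  · rw [hx, add_sub_right_comm, mul_comm, cos_add_int_mul_two_pi, h₂]

lemma exists_abs_apply_sub_le_of_cos_nonneg
    (hℓ : Λ.map (ℓ : E →+ ℝ) = AddSubgroup.zmultiples (2 * π)) {c : ℝ} {x : E}
    (hx : 0 ≤ cos (ℓ x - c)) : ∃ l ∈ Λ, |ℓ (x + l) - c| ≤ π / 2 := by
  obtain ⟨l, hl, hl2⟩ := exists_mem_apply_eq_two_pi hℓ
  obtain ⟨k, hk⟩ := exists_int_abs_add_le_of_cos_nonneg hx
  refine ⟨k • l, zsmul_mem hl k, ?_⟩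
  rwa [map_add, map_zsmul, hl2, zsmul_eq_mul, add_sub_right_comm]

lemma forall_neg_or_forall_pos_of_ne_zero
    (hℓ : Λ.map (ℓ : E →+ ℝ) = AddSubgroup.zmultiples (2 * π)) {u : E → ℝ} (hu : Continuous u)
    (huΛ : ∀ l ∈ Λ, Function.Periodic u l) {c : ℝ} (hne : ∀ x, 0 ≤ cos (ℓ x - c) → u x ≠ 0) :
    (∀ x, 0 ≤ cos (ℓ x - c) → u x < 0) ∨ ∀ x, 0 ≤ cos (ℓ x - c) → 0 < u x := by
  have hslab : Convex ℝ {x | |ℓ x - c| ≤ π / 2} :=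
    (convex_closedBall c (π / 2)).is_linear_preimage ℓ.toLinearMap.isLinear
  by_contra! ⟨⟨x, hx, hux⟩, ⟨y, hy, huy⟩⟩
  obtain ⟨l, hl, hxl⟩ := exists_abs_apply_sub_le_of_cos_nonneg hℓ hx
  obtain ⟨l', hl', hyl⟩ := exists_abs_apply_sub_le_of_cos_nonneg hℓ hy
  rw [← huΛ l hl] at hux
  rw [← huΛ l' hl'] at huy
  obtain ⟨p, hp, hup⟩ := hslab.isPreconnected.intermediate_value hyl hxl hu.continuousOn ⟨huy, hux⟩
  exact hne p (cos_nonneg_of_mem_Icc (abs_le.1 hp)) hup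

end NormedSpace

variable [InnerProductSpace ℝ E] [FiniteDimensional ℝ E] {Λ : AddSubgroup E} {ℓ : E →L[ℝ] ℝ}
  {f : ℝ → ℝ} {u : E → ℝ}

lemma IsPeriodicSolution.neg_of_cos_nonneg (hΛ : Submodule.span ℝ (Λ : Set E) = ⊤)
    (hℓ : Λ.map (ℓ : E →+ ℝ) = AddSubgroup.zmultiples (2 * π)) (hf : IsBrezisOswald f)
    (hu : IsPeriodicSolution Λ f u) {c : ℝ} (hneg : ∀ x, 0 ≤ cos (ℓ x - c) → u x < 0) (x : E) :
    u x < 0 := by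
  obtain ⟨l, hl, hl2⟩ := exists_mem_apply_eq_two_pi hℓ
  refine hu.neg_of_antiperiodic hΛ hf (g := fun x => cos (ℓ x - c)) (e := (2 : ℝ)⁻¹ • l)
    (by fun_prop) (fun l' hl' y => ?_) (fun y => ?_) ?_ hneg x
  · obtain ⟨k, hk⟩ := exists_int_apply_eq hℓ hl'
    simp only [map_add, hk, add_sub_right_comm, cos_add_int_mul_two_pi]
  · simp only [map_add, map_smul, hl2, smul_eq_mul, inv_mul_cancel_left₀ (two_ne_zero' ℝ),
      add_sub_right_comm, cos_add_pi]
  · rwa [← two_smul ℝ, smul_inv_smul₀ two_ne_zero]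

theorem IsPeriodicSolution.exists_eq_zero_and_cos_nonneg
    (hΛ : Submodule.span ℝ (Λ : Set E) = ⊤)
    (hℓ : Λ.map (ℓ : E →+ ℝ) = AddSubgroup.zmultiples (2 * π)) (hf : IsBrezisOswald f)
    (hu : IsPeriodicSolution Λ f u) (hzero : ∃ x, u x = 0) (c : ℝ) :
    ∃ x, u x = 0 ∧ 0 ≤ cos (ℓ x - c) := by
  obtain ⟨y, hy⟩ := hzero
  by_contra! hne
  rcases forall_neg_or_forall_pos_of_ne_zero hℓ hu.contDiff.continuous hu.periodic
    (fun x hx hux => (hne x hux).not_ge hx) with hneg | hpos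
  · exact (hu.neg_of_cos_nonneg hΛ hℓ hf hneg y).ne hy
  · exact ((hu.neg hf.odd).neg_of_cos_nonneg hΛ hℓ hf (fun x hx => neg_neg_iff_pos.2 (hpos x hx))
      y).ne (neg_eq_zero.2 hy)

lemma IsPeriodicSolution.hausdorffEDist_sheetPair_ne_top
    (hΛ : Submodule.span ℝ (Λ : Set E) = ⊤)
    (hℓ : Λ.map (ℓ : E →+ ℝ) = AddSubgroup.zmultiples (2 * π)) (hu : IsPeriodicSolution Λ f u)
    (hzero : ∃ x, u x = 0) (θ₁ θ₂ : ℝ) :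
    Metric.hausdorffEDist {x | u x = 0} (sheetPair ℓ θ₁ θ₂) ≠ ⊤ := by
  have hℓ0 : ℓ ≠ 0 := by
    rintro rfl
    obtain ⟨l, -, hl⟩ := exists_mem_apply_eq_two_pi hℓ
    exact two_pi_pos.ne hl
  exact hausdorffEDist_ne_top_of_add_mem hΛ hzero (sheetPair_nonempty hℓ0 θ₁ θ₂)
    (fun l hl x hx => (hu.periodic l hl x).trans hx) (fun l hl x => add_mem_sheetPair hℓ hl)

theorem exists_pos_forall_le_hausdorffDist_sheetPair (hΛ : Submodule.span ℝ (Λ : Set E) = ⊤)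
    (hℓ : Λ.map (ℓ : E →+ ℝ) = AddSubgroup.zmultiples (2 * π)) {θ₁ θ₂ : ℝ}
    (h : ¬∃ j : ℤ, θ₂ - θ₁ = π + 2 * π * j) :
    ∃ δ > 0, ∀ f u, IsBrezisOswald f → IsPeriodicSolution Λ f u → (∃ x, u x = 0) →
      δ ≤ Metric.hausdorffDist {x | u x = 0} (sheetPair ℓ θ₁ θ₂) := by
  obtain ⟨c, η, hη, h₁, h₂⟩ := exists_cos_sub_eq_neg_of_not_antipodal h
  refine ⟨η / (‖ℓ‖ + 1), by positivity, fun f u hf hu hzero => ?_⟩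
  by_contra! hlt
  obtain ⟨x, hx, hcosx⟩ := hu.exists_eq_zero_and_cos_nonneg hΛ hℓ hf hzero c
  obtain ⟨y, hy, hxy⟩ := Metric.exists_dist_lt_of_hausdorffDist_lt (s := {x | u x = 0}) hx hlt
    (hu.hausdorffEDist_sheetPair_ne_top hΛ hℓ hzero θ₁ θ₂)
  have hcosy : cos (ℓ y - c) = -η := cos_sub_eq_of_mem_sheetPair h₁ h₂ hy
  have hclose : η ≤ |ℓ x - ℓ y| := by
    have hlip := (le_abs_self _).trans (abs_cos_sub_cos_le (ℓ x - c) (ℓ y - c))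
    rw [hcosy, sub_sub_sub_cancel_right] at hlip
    linarith
  have hfar : |ℓ x - ℓ y| < η :=
    calc |ℓ x - ℓ y| ≤ ‖ℓ‖ * dist x y := ℓ.lipschitz.dist_le_mul x y
      _ ≤ (‖ℓ‖ + 1) * dist x y := by gcongr; exact le_add_of_nonneg_right zero_le_one
      _ < η := (lt_div_iff₀' (by positivity)).1 hxy
  exact hfar.not_ge hclose

theorem phase_transition_two_sheets_antipodal_general (hΛ : Submodule.span ℝ (Λ : Set E) = ⊤)
    (hℓ : Λ.map (ℓ : E →+ ℝ) = AddSubgroup.zmultiples (2 * π)) {ι : Type*} {𝓕 : Filter ι}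
    [𝓕.NeBot] {f : ι → ℝ → ℝ} (hf : ∀ i, IsBrezisOswald (f i)) {u : ι → E → ℝ}
    (hu : ∀ i, IsPeriodicSolution Λ (f i) (u i)) (hzero : ∀ i, ∃ x, u i x = 0) {θ₁ θ₂ : ℝ}
    (hdist : Tendsto (fun i => Metric.hausdorffDist {x | u i x = 0} (sheetPair ℓ θ₁ θ₂)) 𝓕 (𝓝 0)) :
    θ₁ ≠ θ₂ ∧ ∃ j : ℤ, θ₂ - θ₁ = π + 2 * π * j := by
  obtain ⟨j, hj⟩ : ∃ j : ℤ, θ₂ - θ₁ = π + 2 * π * j := by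
    by_contra h
    obtain ⟨δ, hδ, hle⟩ := exists_pos_forall_le_hausdorffDist_sheetPair hΛ hℓ h
    exact hδ.not_ge (ge_of_tendsto' hdist fun i => hle (f i) (u i) (hf i) (hu i) (hzero i))
  refine ⟨?_, j, hj⟩
  rintro rfl
  have hodd : π * (1 + 2 * j : ℤ) = 0 := by push_cast; linarith
  rcases mul_eq_zero.1 hodd with hπ | hj0
  · exact pi_ne_zero hπ
  · have := Int.cast_eq_zero.1 hj0
    omega

end Sheets

section Torus

/-- The group of translations of `ℝ^ι` generated by the vectors `p j • e_j`, whose quotient is the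
flat torus `∏ j, ℝ / p j ℤ`. -/
def boxLattice {ι : Type*} [DecidableEq ι] (p : ι → ℝ) : AddSubgroup (EuclideanSpace ℝ ι) :=
  AddSubgroup.closure (range fun j => EuclideanSpace.single j (p j))

lemma smul_euclideanSpaceSingle {ι : Type*} [DecidableEq ι] (j : ι) (r s : ℝ) :
    r • EuclideanSpace.single j s = EuclideanSpace.single j (r * s) := by
  ext i
  simp

lemma span_boxLattice {ι : Type*} [Finite ι] [DecidableEq ι] {p : ι → ℝ} (hp : ∀ j, p j ≠ 0) :
    Submodule.span ℝ (boxLattice p : Set (EuclideanSpace ℝ ι)) = ⊤ := by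
  have := Fintype.ofFinite ι
  rw [eq_top_iff, ← (EuclideanSpace.basisFun ι ℝ).toBasis.span_eq, Submodule.span_le]
  rintro - ⟨j, rfl⟩
  have hmem : EuclideanSpace.single j (p j) ∈ Submodule.span ℝ (boxLattice p : Set _) :=
    Submodule.subset_span (AddSubgroup.subset_closure (mem_range_self j))
  simpa [smul_euclideanSpaceSingle, hp j] using Submodule.smul_mem _ (p j)⁻¹ hmem

lemma map_proj_boxLattice {ι : Type*} [DecidableEq ι] (p : ι → ℝ) (i : ι) :
    (boxLattice p).map (EuclideanSpace.proj i : EuclideanSpace ℝ ι →L[ℝ] ℝ)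
      = AddSubgroup.zmultiples (p i) := by
  rw [boxLattice, AddMonoidHom.map_closure, ← range_comp]
  refine le_antisymm ((AddSubgroup.closure_le _).2 ?_) (AddSubgroup.zmultiples_le.2 ?_)
  · rintro - ⟨j, rfl⟩
    rcases eq_or_ne i j with rfl | hij
    · simp
    · simp [hij, zero_mem]
  · exact AddSubgroup.subset_closure ⟨i, by simp⟩

lemma periodic_of_mem_boxLattice {ι α : Type*} [DecidableEq ι] {p : ι → ℝ}
    {u : EuclideanSpace ℝ ι → α}
    (hu : ∀ j, Function.Periodic u (EuclideanSpace.single j (p j))) :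
    ∀ l ∈ boxLattice p, Function.Periodic u l := fun l hl => by
  induction hl using AddSubgroup.closure_induction with
  | mem l hl =>
    obtain ⟨j, rfl⟩ := hl
    exact hu j
  | zero => simp
  | add l l' _ _ hl hl' => exact hl.add_period hl'
  | neg l _ hl => exact hl.neg

lemma IsPhaseTransitionTorus.isPeriodicSolution {n : ℕ} {W : ℝ → ℝ} {ε : ℝ} (hε : ε ≠ 0)
    {u : EuclideanSpace ℝ (Fin (n + 1)) → ℝ} (hu : IsPhaseTransitionTorus W ε u) :
    IsPeriodicSolution (boxLattice (Fin.cons (2 * π) 1)) (fun s => (ε ^ 2)⁻¹ * deriv W s) u where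
  contDiff := hu.smooth.of_le (by norm_cast)
  mem_Icc := hu.mem_Icc
  periodic := periodic_of_mem_boxLattice fun j => by
    cases j using Fin.cases with
    | zero => simpa [smul_euclideanSpaceSingle] using hu.periodic_first
    | succ j => simpa using hu.periodic_rest j.succ j.succ_ne_zero
  laplacian_eq x := by
    rw [← lap_eq_laplacian (hu.smooth.of_le (by norm_cast)), ← hu.pde x,
      inv_mul_cancel_left₀ (pow_ne_zero 2 hε)]

end Torus

/-- If the nodal sets of double-well phase transitions `u i` on the flat
torus `T^{1+n}` converge in the Hausdorff sense to
`Σ = (({θ_1} ∪ {θ_2}) + 2πℤ) × ℝⁿ` with `θ_1, θ_2 ∈ [0, 2π)`, then `θ_1 ≠ θ_2` and in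
fact `θ_2 - θ_1 ≡ π (mod 2π)`. -/
theorem phase_transition_two_sheets_antipodal
    {W : ℝ → ℝ} (hW : IsDoubleWell W) {n : ℕ} (hn : 1 ≤ n)
    (ε : ℕ → ℝ) (hε_pos : ∀ i, 0 < ε i) (hε_lim : Tendsto ε atTop (nhds 0))
    (u : ℕ → EuclideanSpace ℝ (Fin (n + 1)) → ℝ)
    (hu : ∀ i, IsPhaseTransitionTorus W (ε i) (u i))
    (θ₁ θ₂ : ℝ) (hθ₁ : θ₁ ∈ Set.Ico 0 (2 * π)) (hθ₂ : θ₂ ∈ Set.Ico 0 (2 * π))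
    (Z : ℕ → Set (EuclideanSpace ℝ (Fin (n + 1))))
    (hZ : ∀ i, Z i = {x | u i x = 0}) (hZ_ne : ∀ i, (Z i).Nonempty)
    (Sig : Set (EuclideanSpace ℝ (Fin (n + 1))))
    (hSig : Sig = {x | ∃ j : ℤ, x 0 = θ₁ + 2 * π * j ∨ x 0 = θ₂ + 2 * π * j})
    (hHaus : Tendsto (fun i => Metric.hausdorffDist (Z i) Sig) atTop (nhds 0)) :
    θ₁ ≠ θ₂ ∧ ∃ j : ℤ, θ₂ - θ₁ = π + 2 * π * j := by
  obtain rfl := funext hZ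
  subst hSig
  have hp (j : Fin (n + 1)) : (Fin.cons (2 * π) 1 : Fin (n + 1) → ℝ) j ≠ 0 := by
    cases j using Fin.cases <;> simp [pi_ne_zero]
  exact phase_transition_two_sheets_antipodal_general (span_boxLattice hp)
    (map_proj_boxLattice _ 0)
    (fun i => hW.isBrezisOswald_const_mul_deriv (inv_pos.2 (pow_pos (hε_pos i) 2)))
    (fun i => (hu i).isPeriodicSolution (hε_pos i).ne') hZ_ne hHaus
end

section
/- (Comparison lemma; Guaraco–Marques–Neves.) Fix ε > 0, a double-well potential W, and n ≥ 1. Let Ω ⊆ ℝ^n be a bounded open connected set with closure Ω̄. Let u, v : Ω̄ → [−1, 1] be continuous functions that are smooth on Ω and satisfy ε² Δu = W'(u) and ε² Δv = W'(v) on Ω. If u > 0 everywhere on Ω̄ and v = 0 on the boundary ∂Ω, then u > v everywhere on Ω̄. -/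
open Real Filter Set

/-!
Let `M` be the maximum of `v / u`. If `M > 1`, it is attained in `Ω`, at a point where `M u - v`
has the minimum value `0`; there `0 ≤ Δ(M u - v)`, which is incompatible with the strict
monotonicity of `s ↦ W'(s) / s`. Hence `w = u - v` is nonnegative, and the Lipschitz bound on `W'`
gives `Δw ≤ L w` for some `L > 0`. The exponential `φ(y) = exp ⟪e, y⟫` with `‖e‖ ^ 2 = L` solves
`Δφ = L φ`, so by the minimum principle `w` stays above a small positive multiple of `φ`.
-/

open scoped ContDiff Laplacian RealInnerProductSpace Topology

theorem strictMonoOn_Ioc_of_Ioo {α β : Type*} [LinearOrder α] [TopologicalSpace α] [OrderTopology α]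
    [DenselyOrdered α] [LinearOrder β] [TopologicalSpace β] [OrderClosedTopology β] {g : α → β}
    {a b : α} (hg : StrictMonoOn g (Ioo a b)) (hgb : ContinuousWithinAt g (Ioo a b) b) :
    StrictMonoOn g (Ioc a b) := by
  intro x hx y hy hxy
  obtain ⟨z, hxz, hzy⟩ := exists_between hxy
  have hx' : x ∈ Ioo a b := ⟨hx.1, hxy.trans_le hy.2⟩
  have hz' : z ∈ Ioo a b := ⟨hx.1.trans hxz, hzy.trans_le hy.2⟩
  have hmono : MonotoneOn g (Ioc a b) := by
    have hab : a < b := hx.1.trans_le hx.2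
    rw [← Ioo_insert_right hab]
    refine hg.monotoneOn.insert_of_continuousWithinAt ?_ hgb
    rw [← mem_closure_iff_clusterPt, closure_Ioo hab.ne]
    exact right_mem_Icc.2 hab.le
  exact (hg hx' hz' hxz).trans_le (hmono (Ioo_subset_Ioc_self hz') hy hzy.le)

theorem exists_isLocalMin_smul_sub_of_lt {X : Type*} [TopologicalSpace X] {Ω : Set X} {u v : X → ℝ}
    (hΩ_comp : IsCompact (closure Ω)) (hΩ_open : IsOpen Ω)
    (hu : ContinuousOn u (closure Ω)) (hv : ContinuousOn v (closure Ω))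
    (hu_pos : ∀ x ∈ closure Ω, 0 < u x) (h_bdry : ∀ x ∈ frontier Ω, v x ≤ u x)
    {z : X} (hz : z ∈ closure Ω) (huvz : u z < v z) :
    ∃ x ∈ Ω, ∃ M : ℝ, 1 < M ∧ v x = M * u x ∧ IsLocalMin (M • u - v) x := by
  obtain ⟨x, hx, hmax⟩ := hΩ_comp.exists_isMaxOn ⟨z, hz⟩
    (hv.div hu fun y hy => (hu_pos y hy).ne')
  set M := v x / u x
  have hM : 1 < M := ((one_lt_div (hu_pos z hz)).2 huvz).trans_le (hmax hz)
  have huv : u x < v x := (one_lt_div (hu_pos x hx)).1 hM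
  have hvx : v x = M * u x := (div_mul_cancel₀ _ (hu_pos x hx).ne').symm
  have hxΩ : x ∈ Ω := (closure_eq_self_union_frontier Ω ▸ hx).resolve_right
    fun hxb => huv.not_ge (h_bdry x hxb)
  refine ⟨x, hxΩ, M, hM, hvx, ?_⟩
  filter_upwards [hΩ_open.mem_nhds hxΩ] with y hy
  have hy' : y ∈ closure Ω := subset_closure hy
  have hvy : v y ≤ M * u y := (div_le_iff₀ (hu_pos y hy')).1 (hmax hy')
  simpa [hvx] using hvy

theorem iteratedDeriv_two_nonneg_of_isLocalMin_s9 {g : ℝ → ℝ} {a : ℝ} (hg : ContinuousAt g a)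
    (hmin : IsLocalMin g a) : 0 ≤ iteratedDeriv 2 g a := by
  by_contra! hneg
  have hmax : IsLocalMax g a := isLocalMax_of_deriv_deriv_neg
    (by rwa [iteratedDeriv_succ, iteratedDeriv_one] at hneg) hmin.deriv_eq_zero hg
  have hconst : g =ᶠ[𝓝 a] fun _ => g a := by
    filter_upwards [hmin, hmax] with y hle hge using le_antisymm hge hle
  simp [hconst.iteratedDeriv_eq 2, iteratedDeriv_const] at hneg

section Line

variable {𝕜 E F : Type*} [NontriviallyNormedField 𝕜] [NormedAddCommGroup E] [NormedSpace 𝕜 E]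
  [NormedAddCommGroup F] [NormedSpace 𝕜 F]

theorem iteratedDeriv_two_line_eq_iteratedFDeriv {f : E → F} {x : E} (hf : ContDiffAt 𝕜 2 f x)
    (v : E) :
    iteratedDeriv 2 (fun t : 𝕜 => f (x + t • v)) 0 = iteratedFDeriv 𝕜 2 f x ![v, v] := by
  have hline (t : 𝕜) : HasDerivAt (fun t : 𝕜 => x + t • v) v t := by
    simpa using ((hasDerivAt_id t).smul_const v).const_add x
  have hline_tendsto : Tendsto (fun t : 𝕜 => x + t • v) (𝓝 0) (𝓝 x) := by
    simpa using (hline 0).continuousAt.tendsto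
  have hderiv : deriv (fun t : 𝕜 => f (x + t • v)) =ᶠ[𝓝 0] fun t => fderiv 𝕜 f (x + t • v) v := by
    have hdiff : ∀ᶠ y in 𝓝 x, DifferentiableAt 𝕜 f y :=
      (hf.eventually (by simp)).mono fun y hy => hy.differentiableAt two_ne_zero
    filter_upwards [hline_tendsto.eventually hdiff] with t ht
    exact (ht.hasFDerivAt.comp_hasDerivAt t (hline t)).deriv
  have hfderiv : HasFDerivAt (fderiv 𝕜 f) (fderiv 𝕜 (fderiv 𝕜 f) x) x := by
    have h : ContDiffAt 𝕜 1 (fderiv 𝕜 f) x := hf.fderiv_right (by norm_num)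
    exact (h.differentiableAt one_ne_zero).hasFDerivAt
  have hfderiv_line : HasDerivAt (fun t : 𝕜 => fderiv 𝕜 f (x + t • v))
      (fderiv 𝕜 (fderiv 𝕜 f) x v) 0 :=
    hfderiv.comp_hasDerivAt_of_eq 0 (hline 0) (by simp)
  have hderiv₂ : HasDerivAt (fun t : 𝕜 => fderiv 𝕜 f (x + t • v) v)
      (fderiv 𝕜 (fderiv 𝕜 f) x v v) 0 := by
    simpa only [map_zero, add_zero] using hfderiv_line.clm_apply (hasDerivAt_const 0 v)
  rw [iteratedDeriv_succ, iteratedDeriv_one, hderiv.deriv_eq, hderiv₂.deriv,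
    iteratedFDeriv_two_apply]
  rfl

end Line

theorem contDiff_exp_inner {E : Type*} [NormedAddCommGroup E] [InnerProductSpace ℝ E] {m : ℕ∞ω}
    (e : E) : ContDiff ℝ m fun y : E => exp ⟪e, y⟫ :=
  (contDiff_const.inner ℝ contDiff_id).exp

section Laplacian

variable {E : Type*} [NormedAddCommGroup E] [InnerProductSpace ℝ E] [FiniteDimensional ℝ E]

theorem laplacian_eq_sum_iteratedDeriv_line {F ι : Type*} [NormedAddCommGroup F] [NormedSpace ℝ F]
    [Fintype ι] (b : OrthonormalBasis ι ℝ E) {f : E → F} {x : E} (hf : ContDiffAt ℝ 2 f x) :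
    Δ f x = ∑ i, iteratedDeriv 2 (fun t : ℝ => f (x + t • b i)) 0 := by
  simp only [InnerProductSpace.laplacian_eq_iteratedFDeriv_orthonormalBasis f b,
    iteratedDeriv_two_line_eq_iteratedFDeriv hf]

theorem lap_eq_laplacian_s9 {n : ℕ} {u : EuclideanSpace ℝ (Fin n) → ℝ} {x : EuclideanSpace ℝ (Fin n)}
    (hu : ContDiffAt ℝ 2 u x) : lap u x = Δ u x := by
  simp only [lap, secondDirDeriv,
    laplacian_eq_sum_iteratedDeriv_line (EuclideanSpace.basisFun (Fin n) ℝ) hu,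
    EuclideanSpace.basisFun_apply]

theorem laplacian_nonneg_of_isLocalMin_s9 {w : E → ℝ} {x : E} (hw : ContDiffAt ℝ 2 w x)
    (hmin : IsLocalMin w x) : 0 ≤ Δ w x := by
  rw [laplacian_eq_sum_iteratedDeriv_line (stdOrthonormalBasis ℝ E) hw]
  refine Finset.sum_nonneg fun i _ => ?_
  set line : ℝ → E := fun t => x + t • stdOrthonormalBasis ℝ E i
  have hline : Continuous line := by fun_prop
  have hline_zero : line 0 = x := by simp [line]
  rw [← hline_zero] at hw hmin
  exact iteratedDeriv_two_nonneg_of_isLocalMin_s9 (hw.continuousAt.comp hline.continuousAt)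
    (hmin.comp_continuous hline.continuousAt)

theorem laplacian_exp_inner (e x : E) :
    Δ (fun y => exp ⟪e, y⟫) x = ‖e‖ ^ 2 * exp ⟪e, x⟫ := by
  let b := stdOrthonormalBasis ℝ E
  have hline (i) : iteratedDeriv 2 (fun t : ℝ => exp ⟪e, x + t • b i⟫) 0
      = ⟪e, b i⟫ ^ 2 * exp ⟪e, x⟫ := by
    simp only [inner_add_right, real_inner_smul_right, exp_add, mul_comm _ ⟪e, b i⟫]
    rw [iteratedDeriv_const_mul_field, iteratedDeriv_exp_const_mul]
    simp [mul_comm]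
  rw [laplacian_eq_sum_iteratedDeriv_line b (contDiff_exp_inner e).contDiffAt]
  simp only [hline, ← Finset.sum_mul, b.sum_sq_inner_left]

section Domain

variable {Ω : Set E} (hΩ_bdd : Bornology.IsBounded Ω) (hΩ_open : IsOpen Ω)
include hΩ_bdd hΩ_open

theorem nonneg_of_laplacian_neg_s9 {w : E → ℝ} (hw : ContinuousOn w (closure Ω))
    (hw₂ : ContDiffOn ℝ 2 w Ω) (hΔw : ∀ x ∈ Ω, w x < 0 → Δ w x < 0)
    (hw_bdry : ∀ x ∈ frontier Ω, 0 ≤ w x) : ∀ x ∈ closure Ω, 0 ≤ w x := by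
  intro y hy
  by_contra! hwy
  obtain ⟨x, hx, hmin⟩ := hΩ_bdd.isCompact_closure.exists_isMinOn ⟨y, hy⟩ hw
  have hwx : w x < 0 := (hmin hy).trans_lt hwy
  have hxΩ : x ∈ Ω := (closure_eq_self_union_frontier Ω ▸ hx).resolve_right
    fun hxb => hwx.not_ge (hw_bdry x hxb)
  have hΩx : Ω ∈ 𝓝 x := hΩ_open.mem_nhds hxΩ
  exact (hΔw x hxΩ hwx).not_ge <| laplacian_nonneg_of_isLocalMin_s9 (hw₂.contDiffAt hΩx)
    ((hmin.on_subset subset_closure).isLocalMin hΩx)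

theorem pos_of_laplacian_le_mul [Nontrivial E] {w : E → ℝ} {L : ℝ} (hL : 0 < L)
    (hw : ContinuousOn w (closure Ω)) (hw₂ : ContDiffOn ℝ 2 w Ω)
    (hΔw : ∀ x ∈ Ω, Δ w x ≤ L * w x) (hw_bdry : ∀ x ∈ frontier Ω, 0 < w x) :
    ∀ x ∈ closure Ω, 0 < w x := by
  obtain ⟨e, he⟩ := exists_norm_eq E (sqrt_nonneg L)
  let φ : E → ℝ := fun y => exp ⟪e, y⟫
  have hφ : ContDiff ℝ 2 φ := contDiff_exp_inner e
  have hΔφ (x : E) : Δ φ x = L * φ x := by rw [laplacian_exp_inner, he, sq_sqrt hL.le]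
  obtain ⟨k, hk, hkw⟩ : ∃ k, 0 < k ∧ ∀ x ∈ frontier Ω, k ≤ w x / φ x :=
    (hΩ_bdd.isCompact_closure.of_isClosed_subset isClosed_frontier
      frontier_subset_closure).exists_forall_le'
      ((hw.mono frontier_subset_closure).div hφ.continuous.continuousOn fun x _ => (exp_pos _).ne')
      fun x hx => div_pos (hw_bdry x hx) (exp_pos _)
  have hkφ : ContDiff ℝ 2 (k • φ) := hφ.const_smul k
  have hΔ (x) (hx : x ∈ Ω) : Δ (w - k • φ) x = Δ w x - k * (L * φ x) := by
    rw [(hw₂.contDiffAt (hΩ_open.mem_nhds hx)).laplacian_sub hkφ.contDiffAt,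
      InnerProductSpace.laplacian_smul k hφ.contDiffAt, hΔφ, smul_eq_mul]
  have hwφ : ∀ x ∈ closure Ω, 0 ≤ (w - k • φ) x := by
    refine nonneg_of_laplacian_neg_s9 hΩ_bdd hΩ_open
      (hw.sub hkφ.continuous.continuousOn) (hw₂.sub hkφ.contDiffOn)
      (fun x hx hneg => ?_) fun x hx => sub_nonneg.2 ((le_div_iff₀ (exp_pos _)).1 (hkw x hx))
    calc Δ (w - k • φ) x = Δ w x - k * (L * φ x) := hΔ x hx
      _ ≤ L * w x - k * (L * φ x) := sub_le_sub_right (hΔw x hx) _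
      _ = L * (w - k • φ) x := by simp only [Pi.sub_apply, Pi.smul_apply, smul_eq_mul]; ring
      _ < 0 := mul_neg_of_pos_of_neg hL hneg
  exact fun x hx => (mul_pos hk (exp_pos _)).trans_le (sub_nonneg.1 (hwφ x hx))

theorem le_of_strictMonoOn_div {c b : ℝ} (hc : 0 ≤ c) {f : ℝ → ℝ}
    (hf_mono : StrictMonoOn (fun s => f s / s) (Ioc 0 b)) {u v : E → ℝ}
    (hu : ContinuousOn u (closure Ω)) (hv : ContinuousOn v (closure Ω))
    (hu₂ : ContDiffOn ℝ 2 u Ω) (hv₂ : ContDiffOn ℝ 2 v Ω)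
    (hΔu : ∀ x ∈ Ω, c * Δ u x ≤ f (u x)) (hΔv : ∀ x ∈ Ω, f (v x) ≤ c * Δ v x)
    (hu_pos : ∀ x ∈ closure Ω, 0 < u x) (hv_le : ∀ x ∈ closure Ω, v x ≤ b)
    (h_bdry : ∀ x ∈ frontier Ω, v x ≤ u x) : ∀ x ∈ closure Ω, v x ≤ u x := by
  intro z hz
  by_contra! huvz
  obtain ⟨x, hxΩ, M, hM, hvx, hmin⟩ := exists_isLocalMin_smul_sub_of_lt
    hΩ_bdd.isCompact_closure hΩ_open hu hv hu_pos h_bdry hz huvz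
  have hΩx : Ω ∈ 𝓝 x := hΩ_open.mem_nhds hxΩ
  have hux : 0 < u x := hu_pos x (subset_closure hxΩ)
  have hvb : v x ≤ b := hv_le x (subset_closure hxΩ)
  have huv : u x < v x := hvx ▸ lt_mul_of_one_lt_left hux hM
  have hΔ : Δ v x ≤ M * Δ u x := by
    have hu_x := hu₂.contDiffAt hΩx
    have hv_x := hv₂.contDiffAt hΩx
    have hMu_x : ContDiffAt ℝ 2 (M • u) x := hu_x.const_smul M
    have hΔ_nonneg := laplacian_nonneg_of_isLocalMin_s9 (hMu_x.sub hv_x) hmin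
    rwa [← Pi.sub_def, hMu_x.laplacian_sub hv_x, InnerProductSpace.laplacian_smul M hu_x,
      smul_eq_mul, sub_nonneg] at hΔ_nonneg
  have hfM : f (v x) ≤ M * f (u x) :=
    calc f (v x) ≤ c * Δ v x := hΔv x hxΩ
      _ ≤ c * (M * Δ u x) := mul_le_mul_of_nonneg_left hΔ hc
      _ = M * (c * Δ u x) := mul_left_comm ..
      _ ≤ M * f (u x) := mul_le_mul_of_nonneg_left (hΔu x hxΩ) (by positivity)
  have hratio : f (u x) / u x < f (v x) / v x :=
    hf_mono ⟨hux, huv.le.trans hvb⟩ ⟨hux.trans huv, hvb⟩ huv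
  have hratio_le : f (v x) / v x ≤ f (u x) / u x := by
    rw [div_le_div_iff₀ (hux.trans huv) hux]
    calc f (v x) * u x ≤ M * f (u x) * u x := mul_le_mul_of_nonneg_right hfM hux.le
      _ = f (u x) * v x := by rw [hvx]; ring
  exact hratio.not_ge hratio_le

theorem phase_transition_comparison_general [Nontrivial E] {c b : ℝ} (hc : 0 < c) {f : ℝ → ℝ}
    (hf : LocallyLipschitz f) (hf_mono : StrictMonoOn (fun s => f s / s) (Ioo 0 b)) {u v : E → ℝ}
    (hu : ContinuousOn u (closure Ω)) (hv : ContinuousOn v (closure Ω))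
    (hu₂ : ContDiffOn ℝ 2 u Ω) (hv₂ : ContDiffOn ℝ 2 v Ω)
    (hΔu : ∀ x ∈ Ω, c * Δ u x ≤ f (u x)) (hΔv : ∀ x ∈ Ω, f (v x) ≤ c * Δ v x)
    (hu_pos : ∀ x ∈ closure Ω, 0 < u x) (hv_le : ∀ x ∈ closure Ω, v x ≤ b)
    (h_bdry : ∀ x ∈ frontier Ω, v x < u x) : ∀ x ∈ closure Ω, v x < u x := by
  have hf_mono_Ioc : StrictMonoOn (fun s => f s / s) (Ioc 0 b) := by
    rcases le_or_gt b 0 with hb | hb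
    · exact (Ioc_eq_empty_of_le hb ▸ subsingleton_empty).strictMonoOn _
    · exact strictMonoOn_Ioc_of_Ioo hf_mono
        (hf.continuous.continuousAt.div continuousAt_id hb.ne').continuousWithinAt
  have hvu : ∀ x ∈ closure Ω, v x ≤ u x :=
    le_of_strictMonoOn_div hΩ_bdd hΩ_open hc.le hf_mono_Ioc hu hv hu₂ hv₂ hΔu hΔv hu_pos hv_le
      fun x hx => (h_bdry x hx).le
  obtain ⟨L, hL⟩ : ∃ L, LipschitzOnWith L f (u '' closure Ω ∪ v '' closure Ω) :=
    hf.locallyLipschitzOn.exists_lipschitzOnWith_of_compact <|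
      (hΩ_bdd.isCompact_closure.image_of_continuousOn hu).union
        (hΩ_bdd.isCompact_closure.image_of_continuousOn hv)
  have hf_sub (x) (hx : x ∈ closure Ω) : f (u x) - f (v x) ≤ (L + 1) * (u x - v x) := by
    have h := hL.dist_le_mul (u x) (.inl ⟨x, hx, rfl⟩) (v x) (.inr ⟨x, hx, rfl⟩)
    rw [dist_eq, dist_eq, abs_of_nonneg (sub_nonneg.2 (hvu x hx))] at h
    linarith [le_abs_self (f (u x) - f (v x)), hvu x hx]
  have hΔ : ∀ x ∈ Ω, Δ (u - v) x ≤ (L + 1) / c * (u - v) x := fun x hx => by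
    have hΩx : Ω ∈ 𝓝 x := hΩ_open.mem_nhds hx
    rw [(hu₂.contDiffAt hΩx).laplacian_sub (hv₂.contDiffAt hΩx), Pi.sub_apply, div_mul_eq_mul_div,
      le_div_iff₀' hc]
    linarith [hΔu x hx, hΔv x hx, hf_sub x (subset_closure hx)]
  have hpos := pos_of_laplacian_le_mul hΩ_bdd hΩ_open (by positivity) (hu.sub hv) (hu₂.sub hv₂) hΔ
    fun x hx => sub_pos.2 (h_bdry x hx)
  exact fun x hx => sub_pos.1 (hpos x hx)

end Domain

end Laplacian

theorem IsDoubleWell.locallyLipschitz_deriv {W : ℝ → ℝ} (hW : IsDoubleWell W) :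
    LocallyLipschitz (deriv W) :=
  ((contDiff_infty_iff_deriv.1 hW.smooth).2.of_le (by norm_cast)).locallyLipschitz (𝕂 := ℝ)

/-- **Guaraco–Marques–Neves comparison lemma.** On a bounded open connected
`Ω ⊆ ℝⁿ`, if `u, v : Ω̄ → [-1,1]` are continuous on `Ω̄`, smooth solutions of
`ε² Δw = W'(w)` on `Ω`, `u > 0` on `Ω̄` and `v = 0` on `∂Ω`, then `u > v` on `Ω̄`. -/
theorem phase_transition_comparison
    {ε : ℝ} (hε : 0 < ε) {W : ℝ → ℝ} (hW : IsDoubleWell W) {n : ℕ} (hn : 1 ≤ n)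
    (Ω : Set (EuclideanSpace ℝ (Fin n)))
    (hΩ_bdd : Bornology.IsBounded Ω) (hΩ_open : IsOpen Ω) (hΩ_conn : IsConnected Ω)
    (u v : EuclideanSpace ℝ (Fin n) → ℝ)
    (hu_cont : ContinuousOn u (closure Ω)) (hv_cont : ContinuousOn v (closure Ω))
    (hu_smooth : ContDiffOn ℝ (⊤ : ℕ∞) u Ω) (hv_smooth : ContDiffOn ℝ (⊤ : ℕ∞) v Ω)
    (hu_mem : ∀ x ∈ closure Ω, u x ∈ Set.Icc (-1 : ℝ) 1)
    (hv_mem : ∀ x ∈ closure Ω, v x ∈ Set.Icc (-1 : ℝ) 1)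
    (hu_pde : ∀ x ∈ Ω, ε ^ 2 * lap u x = deriv W (u x))
    (hv_pde : ∀ x ∈ Ω, ε ^ 2 * lap v x = deriv W (v x))
    (hu_pos : ∀ x ∈ closure Ω, 0 < u x)
    (hv_bdry : ∀ x ∈ frontier Ω, v x = 0) :
    ∀ x ∈ closure Ω, v x < u x := by
  have : Nonempty (Fin n) := ⟨⟨0, hn⟩⟩
  have hu₂ : ContDiffOn ℝ 2 u Ω := hu_smooth.of_le (by norm_cast)
  have hv₂ : ContDiffOn ℝ 2 v Ω := hv_smooth.of_le (by norm_cast)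
  have hlap {w : EuclideanSpace ℝ (Fin n) → ℝ} (hw : ContDiffOn ℝ 2 w Ω) {x} (hx : x ∈ Ω) :
      Δ w x = lap w x := (lap_eq_laplacian_s9 (hw.contDiffAt (hΩ_open.mem_nhds hx))).symm
  exact phase_transition_comparison_general hΩ_bdd hΩ_open (sq_pos_of_pos hε)
    hW.locallyLipschitz_deriv hW.mono hu_cont hv_cont hu₂ hv₂
    (fun x hx => (hlap hu₂ hx ▸ hu_pde x hx).le) (fun x hx => (hlap hv₂ hx ▸ hv_pde x hx).ge)
    hu_pos (fun x hx => (hv_mem x hx).2)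
    fun x hx => hv_bdry x hx ▸ hu_pos x (frontier_subset_closure hx)
end

section
/- (Energy comparison ruling out the zero minimizer.) Fix ℓ > 0 and a double-well potential W, and for ε > 0 and a Lipschitz function v : [−ℓ, ℓ] → ℝ define E_ε(v) := ∫_{−ℓ}^{ℓ} ( (ε/2) v'(t)² + ε^{−1} W(v(t)) ) dt. Then there exists ε₀ > 0, depending on ℓ and W, such that for every ε ∈ (0, ε₀) there is a Lipschitz function v : [−ℓ, ℓ] → [0, 1] with v(−ℓ) = v(ℓ) = 0 and E_ε(v) < E_ε(0) = 2ℓ W(0)/ε. -/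
open Real Filter Set

/-!
For a fixed competitor `v`, the rescaled energy `ε E_ε(v) = (ε² / 2) ∫ v'² + ∫ W(v)` tends to
`∫ W(v)` as `ε → 0`, while `ε E_ε(0) = 2 ℓ W(0)` for every `ε`. So it suffices to find one `v` with
`∫ W(v) < 2 ℓ W(0)`: since `W(1) < W(0)`, any profile close enough to the constant `1` in the
interior of the interval will do.
-/

open MeasureTheory (volume)
open scoped Topology

theorem tendsto_intervalIntegral_comp_of_isCompact {X E ι : Type*} [TopologicalSpace X]
    [NormedAddCommGroup E] [NormedSpace ℝ E] {l : Filter ι} [l.IsCountablyGenerated]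
    {s : Set X} (hs : IsCompact s) {W : X → E} (hW : ContinuousOn W s)
    {u : ι → ℝ → X} (hu : ∀ i, Continuous (u i)) (hus : ∀ i t, u i t ∈ s)
    {x : X} (hx : x ∈ s) {a b : ℝ}
    (hlim : ∀ t ∈ uIoo a b, Tendsto (fun i ↦ u i t) l (𝓝 x)) :
    Tendsto (fun i ↦ ∫ t in a..b, W (u i t)) l (𝓝 (∫ _ in a..b, W x)) := by
  obtain ⟨C, hC⟩ := hs.exists_bound_of_continuousOn hW
  refine intervalIntegral.tendsto_integral_filter_of_dominated_convergence (fun _ ↦ C)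
    (.of_forall fun i ↦ (hW.comp_continuous (hu i) (hus i)).aestronglyMeasurable)
    (.of_forall fun i ↦ .of_forall fun t _ ↦ hC _ (hus i t)) intervalIntegrable_const ?_
  filter_upwards [MeasureTheory.Measure.ae_ne volume (max a b)] with t ht_ne ht
  exact (hW x hx).tendsto.comp <| tendsto_nhdsWithin_iff.mpr
    ⟨hlim t ⟨ht.1, ht.2.lt_of_ne ht_ne⟩, .of_forall fun i ↦ hus i t⟩

/-- The Allen–Cahn energy `E_ε(v)` on the interval from `a` to `b`, whose minimizers are at issue.
The derivative is Mathlib's `deriv`, hence `0` where `v` is not differentiable; for Lipschitz `v`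
this affects only a null set. -/
noncomputable def allenCahnEnergy (W : ℝ → ℝ) (a b ε : ℝ) (v : ℝ → ℝ) : ℝ :=
  ∫ t in a..b, (ε / 2 * deriv v t ^ 2 + ε⁻¹ * W (v t))

theorem allenCahnEnergy_eq {W v : ℝ → ℝ} {a b : ℝ}
    (hv : IntervalIntegrable (fun t ↦ deriv v t ^ 2) volume a b)
    (hWv : IntervalIntegrable (fun t ↦ W (v t)) volume a b) (ε : ℝ) :
    allenCahnEnergy W a b ε v =
      ε / 2 * (∫ t in a..b, deriv v t ^ 2) + ε⁻¹ * ∫ t in a..b, W (v t) := by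
  rw [allenCahnEnergy, intervalIntegral.integral_add (hv.const_mul _) (hWv.const_mul _),
    intervalIntegral.integral_const_mul, intervalIntegral.integral_const_mul]

theorem tendsto_mul_allenCahnEnergy {W v : ℝ → ℝ} {a b : ℝ}
    (hv : IntervalIntegrable (fun t ↦ deriv v t ^ 2) volume a b)
    (hWv : IntervalIntegrable (fun t ↦ W (v t)) volume a b) :
    Tendsto (fun ε ↦ ε * allenCahnEnergy W a b ε v) (𝓝[>] 0) (𝓝 (∫ t in a..b, W (v t))) := by
  have hlim : Tendsto (fun ε : ℝ ↦ ε ^ 2 / 2 * (∫ t in a..b, deriv v t ^ 2) +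
      ∫ t in a..b, W (v t)) (𝓝[>] 0) (𝓝 (∫ t in a..b, W (v t))) :=
    tendsto_nhdsWithin_of_tendsto_nhds <| Continuous.tendsto' (by fun_prop) _ _ (by simp)
  refine hlim.congr' ?_
  filter_upwards [self_mem_nhdsWithin] with ε (hε : 0 < ε)
  rw [allenCahnEnergy_eq hv hWv]
  field_simp

/-- The competitor `c (1 - sin (π t / (2 ℓ)) ^ (2 n))`: it vanishes at `±ℓ` and, as `n` grows, it
flattens out to the constant `c` inside `(-ℓ, ℓ)`. A trigonometric polynomial is used, rather than
a trapezoid, so that it is both smooth and globally Lipschitz. -/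
noncomputable def plateau (c ℓ : ℝ) (n : ℕ) (t : ℝ) : ℝ :=
  c * (1 - sin (π / (2 * ℓ) * t) ^ (2 * n))

section plateau

variable {c ℓ : ℝ}

theorem contDiff_plateau (c ℓ : ℝ) (n : ℕ) {k : WithTop ℕ∞} : ContDiff ℝ k (plateau c ℓ n) := by
  unfold plateau
  fun_prop

theorem exists_lipschitzWith_plateau (c ℓ : ℝ) (n : ℕ) :
    ∃ K : NNReal, LipschitzWith K (plateau c ℓ n) := by
  have hprofile : ContDiff ℝ 1 fun x : ℝ ↦ c * (1 - x ^ (2 * n)) := by fun_prop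
  obtain ⟨K, hK⟩ := (hprofile.locallyLipschitz.locallyLipschitzOn
    (s := Icc (-1) 1)).exists_lipschitzOnWith_of_compact isCompact_Icc
  have hsin := lipschitzWith_sin.comp (lipschitzWith_smul (β := ℝ) (π / (2 * ℓ)))
  exact ⟨_, lipschitzOnWith_univ.mp <|
    hK.comp hsin.lipschitzOnWith fun t _ ↦ sin_mem_Icc (π / (2 * ℓ) * t)⟩

theorem plateau_mem_Icc (hc : 0 ≤ c) (n : ℕ) (t : ℝ) : plateau c ℓ n t ∈ Icc 0 c := by
  have hpow : sin (π / (2 * ℓ) * t) ^ (2 * n) ∈ Icc 0 1 := by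
    rw [pow_mul]
    exact ⟨by positivity, pow_le_one₀ (sq_nonneg _) (sin_sq_le_one _)⟩
  exact ⟨mul_nonneg hc (sub_nonneg.mpr hpow.2),
    mul_le_of_le_one_right hc (sub_le_self 1 hpow.1)⟩

theorem plateau_neg (c ℓ : ℝ) (n : ℕ) (t : ℝ) : plateau c ℓ n (-t) = plateau c ℓ n t := by
  simp only [plateau, mul_neg, sin_neg, (even_two_mul n).neg_pow]

theorem plateau_self (c : ℝ) (hℓ : ℓ ≠ 0) (n : ℕ) : plateau c ℓ n ℓ = 0 := by
  have harg : π / (2 * ℓ) * ℓ = π / 2 := by field_simp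
  simp only [plateau, harg, sin_pi_div_two, one_pow, sub_self, mul_zero]

theorem tendsto_plateau (c : ℝ) {t : ℝ} (ht : t ∈ Ioo (-ℓ) ℓ) :
    Tendsto (fun n ↦ plateau c ℓ n t) atTop (𝓝 c) := by
  have hℓ : 0 < ℓ := by linarith [ht.1, ht.2]
  have hcos : 0 < cos (π / (2 * ℓ) * t) := by
    have hscale : π / (2 * ℓ) * ℓ = π / 2 := by field_simp
    have hpos : 0 < π / (2 * ℓ) := by positivity
    exact cos_pos_of_mem_Ioo ⟨by nlinarith [ht.1], by nlinarith [ht.2]⟩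
  have hsin : sin (π / (2 * ℓ) * t) ^ 2 < 1 := by
    rw [sin_sq]
    exact sub_lt_self 1 (by positivity)
  have hpow := tendsto_pow_atTop_nhds_zero_of_lt_one (sq_nonneg _) hsin
  simpa [plateau, pow_mul] using (hpow.const_sub 1).const_mul c

theorem tendsto_integral_comp_plateau (hℓ : 0 < ℓ) (hc : 0 ≤ c) {W : ℝ → ℝ}
    (hW : ContinuousOn W (Icc 0 c)) :
    Tendsto (fun n ↦ ∫ t in (-ℓ)..ℓ, W (plateau c ℓ n t)) atTop (𝓝 (2 * ℓ * W c)) := by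
  have hlen : ∫ _ in (-ℓ)..ℓ, W c = 2 * ℓ * W c := by
    rw [intervalIntegral.integral_const, smul_eq_mul]
    ring
  rw [← hlen]
  refine tendsto_intervalIntegral_comp_of_isCompact isCompact_Icc hW
    (fun n ↦ (contDiff_plateau c ℓ n (k := 0)).continuous) (plateau_mem_Icc hc)
    (right_mem_Icc.mpr hc) fun t ht ↦ tendsto_plateau c ?_
  rwa [uIoo_of_le (by linarith)] at ht

end plateau

theorem energy_comparison_zero_not_minimizer_general {ℓ : ℝ} (hℓ : 0 < ℓ) {c : ℝ} (hc : 0 ≤ c)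
    {W : ℝ → ℝ} (hW : ContinuousOn W (Icc 0 c)) (hlt : W c < W 0) :
    ∃ ε₀ > 0, ∃ (v : ℝ → ℝ) (K : NNReal), LipschitzWith K v ∧
      (∀ t, v t ∈ Icc 0 c) ∧ v (-ℓ) = 0 ∧ v ℓ = 0 ∧
      ∀ ε ∈ Ioo 0 ε₀, allenCahnEnergy W (-ℓ) ℓ ε v < 2 * ℓ * W 0 / ε := by
  have hlt' : 2 * ℓ * W c < 2 * ℓ * W 0 := by gcongr
  obtain ⟨n, hn⟩ :=
    ((tendsto_integral_comp_plateau hℓ hc hW).eventually_lt_const hlt').exists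
  obtain ⟨K, hK⟩ := exists_lipschitzWith_plateau c ℓ n
  have hderiv : Continuous (deriv (plateau c ℓ n)) :=
    (contDiff_plateau c ℓ n).continuous_deriv le_rfl
  have hcomp : Continuous fun t ↦ W (plateau c ℓ n t) :=
    hW.comp_continuous hK.continuous (plateau_mem_Icc hc n)
  obtain ⟨ε₀, hε₀, hsmall⟩ := mem_nhdsGT_iff_exists_Ioo_subset.mp <|
    (tendsto_mul_allenCahnEnergy ((hderiv.pow 2).intervalIntegrable _ _)
      (hcomp.intervalIntegrable _ _)).eventually_lt_const hn
  have hend : plateau c ℓ n ℓ = 0 := plateau_self c hℓ.ne' n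
  exact ⟨ε₀, hε₀, plateau c ℓ n, K, hK, plateau_mem_Icc hc n, (plateau_neg c ℓ n ℓ).trans hend,
    hend, fun ε hε ↦ (lt_div_iff₀' hε.1).mpr (hsmall hε)⟩

theorem IsDoubleWell.apply_one_lt_apply_zero {W : ℝ → ℝ} (hW : IsDoubleWell W) : W 1 < W 0 := by
  have hzero : W 0 ≠ 0 := by simp [hW.eq_zero_iff]
  rw [(hW.eq_zero_iff 1).mpr (.inl rfl)]
  exact (hW.nonneg 0).lt_of_ne' hzero

/-- **Energy comparison ruling out the zero minimizer.** For small enough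
`ε > 0` there is a Lipschitz `v : [-ℓ, ℓ] → [0, 1]` vanishing at `±ℓ` with
`E_ε(v) = ∫ (ε/2) v'² + ε⁻¹ W(v) < E_ε(0) = 2ℓ W(0)/ε`. -/
theorem energy_comparison_zero_not_minimizer
    {ℓ : ℝ} (hℓ : 0 < ℓ) {W : ℝ → ℝ} (hW : IsDoubleWell W) :
    ∃ ε₀ > 0, ∀ ε : ℝ, ε ∈ Set.Ioo 0 ε₀ →
      ∃ (v : ℝ → ℝ) (K : NNReal), LipschitzWith K v ∧
        (∀ t ∈ Set.Icc (-ℓ) ℓ, v t ∈ Set.Icc (0 : ℝ) 1) ∧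
        v (-ℓ) = 0 ∧ v ℓ = 0 ∧
        (∫ t in (-ℓ)..ℓ, (ε / 2 * (deriv v t) ^ 2 + ε⁻¹ * W (v t)))
          < 2 * ℓ * W 0 / ε := by
  obtain ⟨ε₀, hε₀, v, K, hK, hmem, hleft, hright, hlt⟩ :=
    energy_comparison_zero_not_minimizer_general hℓ zero_le_one
      hW.smooth.continuous.continuousOn hW.apply_one_lt_apply_zero
  exact ⟨ε₀, hε₀, fun ε hε ↦ ⟨v, K, hK, fun t _ ↦ hmem t, hleft, hright, hlt ε hε⟩⟩
end
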